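/- arXiv:2412.20809 — 2 statements merged into one kernel-verified Lean document; each statement's English description precedes it below -/
import Mathlib

section
/- Let k be an algebraically closed field of characteristic 0 and λ any partition of N. Then the Zariski closure in Mat_N(k) of the set {x + y : x, y ∈ O_λ} equals the Zariski closure of the set {a·x − x·a : a ∈ Mat_N(k), x ∈ O_λ}; that is, the conical secant variety of the nilpotent orbit O_λ ⊂ sl_N coincides with the closure of the union of its embedded tangent spaces, equivalently with the closure of the image of the moment map of the cotangent bundle of the orbit. -/
open Matrix

noncomputable section

/-- The Zariski closure of a set of `N × N` matrices. -/
def zClosure {k : Type*} [CommRing k] {N : ℕ}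
    (S : Set (Matrix (Fin N) (Fin N) k)) : Set (Matrix (Fin N) (Fin N) k) :=
  {M | ∀ P : MvPolynomial (Fin N × Fin N) k,
      (∀ x ∈ S, MvPolynomial.eval (fun q => x q.1 q.2) P = 0) →
      MvPolynomial.eval (fun q => M q.1 q.2) P = 0}

/-- The set of nilpotent matrices of Jordan type `lam`. -/
def jordanOrbit (k : Type*) [Field k] (N : ℕ) {p : ℕ} (lam : Fin p → ℕ) :
    Set (Matrix (Fin N) (Fin N) k) :=
  {M | ∀ i : ℕ, 1 ≤ i → (M ^ i).rank = ∑ l, (lam l - i)}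

/-! A tangent vector `a * x - x * a` is the limit at `t = 0` of `t⁻¹ • g x g⁻¹ - t⁻¹ • x`,
where `g = 1 + t • a`; so the tangent spaces lie in the secant variety.

Conversely, let `x` and `y` be in the orbit. Suppose first that `x² = y² = 0`, with rank
factorizations `x = U * V` and `y = U' * V'`. Generically `U'` and `V'` can be rescaled to
`V * U' = 1` and `V' * U = 1`, at the price of a middle factor `M` in `y = U' * M * V'`, and squares
`M = S * S` are dense. In that case `x + y` is the commutator of `U * V'` with the orbit element
`(U - U' * S) * (V + S * V')`.

If the orbit is not square-zero, it matters only that `x + y` is traceless and of rank at most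
`s = min (2 * rank x) N`. Write it as `X * Y` with inner dimension `s`. Generically `Y * X` is
invertible, traceless and has a cyclic vector. Powers of `Y * X` and Horner quotients of its
characteristic polynomial, applied to the cyclic vector, give a basis in which it is a subdiagonal
shift plus an upper right block, because the trace vanishes. Such a matrix is a commutator with a
shift by about `s / 2`, and this shift is a degeneration of the orbit. -/

open Polynomial

/-! ### Polynomial curves of matrices -/

section PolynomialCurves

variable {k : Type*} [CommRing k] {m n o : Type*}

/-- A scalar function given by a polynomial. Genericity along a curve is expressed by `f t ≠ 0` for
such an `f`. -/
def IsPolyFun (f : k → k) : Prop := ∃ p : k[X], ∀ t, f t = p.eval t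

/-- A polynomial curve of matrices, given by a matrix of polynomials. Elements of a Zariski closure
are obtained as special values of such curves. -/
def IsPolyMap (F : k → Matrix m n k) : Prop := ∃ G : Matrix m n k[X], ∀ t, F t = G.map (eval t)

lemma IsPolyFun.mul {f g : k → k} (hf : IsPolyFun f) (hg : IsPolyFun g) :
    IsPolyFun fun t => f t * g t := by
  obtain ⟨p, hp⟩ := hf
  obtain ⟨q, hq⟩ := hg
  exact ⟨p * q, fun t => by simp [hp, hq]⟩

lemma IsPolyFun.prod {ι : Type*} (s : Finset ι) {f : ι → k → k} (hf : ∀ i, IsPolyFun (f i)) :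
    IsPolyFun fun t => ∏ i ∈ s, f i t := by
  choose p hp using hf
  exact ⟨∏ i ∈ s, p i, fun t => by simp [hp, eval_prod]⟩

lemma IsPolyFun.exists_ne_zero [IsDomain k] [Infinite k] {f g : k → k} (hf : IsPolyFun f)
    (hg : IsPolyFun g) {s t : k} (hs : f s ≠ 0) (ht : g t ≠ 0) : ∃ u, f u ≠ 0 ∧ g u ≠ 0 := by
  obtain ⟨p, hp⟩ := hf
  obtain ⟨q, hq⟩ := hg
  have hpq : p * q ≠ 0 := by
    refine mul_ne_zero ?_ ?_
    · rintro rfl; simp [hp] at hs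
    · rintro rfl; simp [hq] at ht
  by_contra! h
  refine hpq (Polynomial.funext fun u => ?_)
  by_cases hu : f u = 0
  · simp [← hp, hu]
  · simp [← hq, h u hu]

lemma IsPolyMap.const (A : Matrix m n k) : IsPolyMap fun _ : k => A :=
  ⟨A.map C, fun t => by ext; simp⟩

lemma IsPolyMap.line (A B : Matrix m n k) : IsPolyMap fun t : k => (1 - t) • A + t • B :=
  ⟨(1 - X : k[X]) • A.map C + (X : k[X]) • B.map C, fun t => by ext; simp; ring⟩

lemma IsPolyMap.add {F G : k → Matrix m n k} (hF : IsPolyMap F) (hG : IsPolyMap G) :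
    IsPolyMap fun t => F t + G t := by
  obtain ⟨p, hp⟩ := hF
  obtain ⟨q, hq⟩ := hG
  exact ⟨p + q, fun t => by ext; simp [hp, hq]⟩

lemma IsPolyMap.sub {F G : k → Matrix m n k} (hF : IsPolyMap F) (hG : IsPolyMap G) :
    IsPolyMap fun t => F t - G t := by
  obtain ⟨p, hp⟩ := hF
  obtain ⟨q, hq⟩ := hG
  exact ⟨p - q, fun t => by ext; simp [hp, hq]⟩

lemma IsPolyMap.mul [Fintype n] {F : k → Matrix m n k} {G : k → Matrix n o k}
    (hF : IsPolyMap F) (hG : IsPolyMap G) : IsPolyMap fun t => F t * G t := by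
  obtain ⟨p, hp⟩ := hF
  obtain ⟨q, hq⟩ := hG
  exact ⟨p * q, fun t => by ext; simp [hp, hq, Matrix.mul_apply, eval_finsetSum]⟩

variable [Fintype m] [DecidableEq m]

lemma IsPolyMap.pow {F : k → Matrix m m k} (hF : IsPolyMap F) (i : ℕ) :
    IsPolyMap fun t => F t ^ i := by
  induction i with
  | zero => simpa using IsPolyMap.const (1 : Matrix m m k)
  | succ i ih => simpa only [pow_succ] using ih.mul hF

lemma IsPolyMap.det {F : k → Matrix m m k} (hF : IsPolyMap F) : IsPolyFun fun t => (F t).det := by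
  obtain ⟨p, hp⟩ := hF
  refine ⟨p.det, fun t => ?_⟩
  simp only [hp]
  exact ((evalRingHom t).map_det p).symm

lemma IsPolyMap.adjugate {F : k → Matrix m m k} (hF : IsPolyMap F) :
    IsPolyMap fun t => (F t).adjugate := by
  obtain ⟨p, hp⟩ := hF
  refine ⟨p.adjugate, fun t => ?_⟩
  simp only [hp]
  exact ((evalRingHom t).map_adjugate p).symm

end PolynomialCurves

/-! ### Zariski closures -/

section Closure

variable {k : Type*} [CommRing k] {N : ℕ} {S S' : Set (Matrix (Fin N) (Fin N) k)}

lemma subset_zClosure : S ⊆ zClosure S := fun M hM _ hP => hP M hM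

lemma zClosure_subset_zClosure (h : S ⊆ zClosure S') : zClosure S ⊆ zClosure S' :=
  fun _ hM P hP => hM P fun _ hx => h hx P hP

lemma IsPolyMap.mem_zClosure [IsDomain k] [Infinite k] {F : k → Matrix (Fin N) (Fin N) k}
    (hF : IsPolyMap F) {f : k → k} (hf : IsPolyFun f) {t₁ : k} (ht₁ : f t₁ ≠ 0)
    (h : ∀ t, f t ≠ 0 → F t ∈ zClosure S) (t₀ : k) : F t₀ ∈ zClosure S := by
  intro P hP
  by_contra hne
  obtain ⟨G, hG⟩ := hF
  have hPF : IsPolyFun fun t => MvPolynomial.eval (fun q => F t q.1 q.2) P := by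
    refine ⟨MvPolynomial.eval₂ Polynomial.C (fun q => G q.1 q.2) P, fun t => ?_⟩
    rw [MvPolynomial.polynomial_eval_eval₂]
    have : (Polynomial.evalRingHom t).comp Polynomial.C = RingHom.id k := by ext; simp
    rw [this, MvPolynomial.eval₂_id]
    simp only [hG, map_apply]
  obtain ⟨u, hu, hu'⟩ := hf.exists_ne_zero hPF ht₁ hne
  exact hu' (h u hu P hP)

lemma add_mul_mul_mem_zClosure {r : ℕ} {T : Set (Matrix (Fin r) (Fin r) k)}
    {W : Matrix (Fin N) (Fin N) k} {U : Matrix (Fin N) (Fin r) k} {V : Matrix (Fin r) (Fin N) k}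
    (h : ∀ X ∈ T, W + U * X * V ∈ S) {M : Matrix (Fin r) (Fin r) k} (hM : M ∈ zClosure T) :
    W + U * M * V ∈ zClosure S := by
  intro P hP
  let c : k →+* MvPolynomial (Fin r × Fin r) k := MvPolynomial.C
  let G := W.map c + U.map c * mvPolynomialX (Fin r) (Fin r) k * V.map c
  have hG : ∀ X : Matrix (Fin r) (Fin r) k,
      MvPolynomial.eval (fun q => X q.1 q.2) (MvPolynomial.bind₁ (fun q => G q.1 q.2) P) =
        MvPolynomial.eval (fun q => (W + U * X * V) q.1 q.2) P := by
    intro X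
    rw [← MvPolynomial.aeval_eq_eval, ← MvPolynomial.aeval_eq_eval, MvPolynomial.aeval_bind₁]
    congr! 2 with q
    simp [G, c, Matrix.mul_apply]
  rw [← hG]
  exact hM _ fun X hX => by rw [hG, hP _ (h X hX)]

end Closure

/-! ### Density of the squares -/

section Squares

variable {k : Type*} [Field k] {m : Type*} [Fintype m]

lemma aeval_mul_self_eq_aeval_mvPolynomialX {R A : Type*} [CommRing R] [CommRing A] [Algebra R A]
    (P : MvPolynomial (m × m) R) (S : Matrix m m A) :
    MvPolynomial.aeval (fun q => (S * S) q.1 q.2) P = MvPolynomial.aeval (fun q => S q.1 q.2)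
      (MvPolynomial.aeval (fun q => (mvPolynomialX m m R * mvPolynomialX m m R) q.1 q.2) P) := by
  rw [← AlgHom.comp_apply, MvPolynomial.comp_aeval]
  congr! 2 with q
  simp [Matrix.mul_apply]

lemma aeval_mul_self_eq_zero_of_forall_eval [Infinite k] {P : MvPolynomial (m × m) k}
    (hP : ∀ S : Matrix m m k, MvPolynomial.eval (fun q => (S * S) q.1 q.2) P = 0)
    {A : Type*} [CommRing A] [Algebra k A] (S : Matrix m m A) :
    MvPolynomial.aeval (fun q => (S * S) q.1 q.2) P = 0 := by
  suffices h : MvPolynomial.aeval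
      (fun q => (mvPolynomialX m m k * mvPolynomialX m m k) q.1 q.2) P = 0 by
    rw [aeval_mul_self_eq_aeval_mvPolynomialX, h, map_zero]
  refine MvPolynomial.funext fun x => ?_
  have hx := hP (of fun i j => x (i, j))
  rw [← MvPolynomial.aeval_eq_eval, aeval_mul_self_eq_aeval_mvPolynomialX] at hx
  rw [map_zero, ← hx]
  rfl

lemma exists_dvd_sq_sub_X_of_separable [IsAlgClosed k] {f : k[X]} (hf : f.Separable) :
    ∃ g : k[X], f ∣ g ^ 2 - X := by
  classical
  choose ρ hρ using fun c : k => IsAlgClosed.exists_pow_nat_eq c two_pos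
  refine ⟨Lagrange.interpolate f.roots.toFinset id ρ, ?_⟩
  rcases eq_or_ne (Lagrange.interpolate f.roots.toFinset id ρ ^ 2 - X) 0 with h0 | h0
  · rw [h0]
    exact dvd_zero f
  refine (IsAlgClosed.splits f).dvd_of_roots_le_roots hf.ne_zero
    ((Multiset.le_iff_subset (nodup_roots hf)).mpr fun c hc => ?_)
  have heval : (Lagrange.interpolate f.roots.toFinset id ρ).eval c = ρ c :=
    Lagrange.eval_interpolate_at_node ρ Function.injective_id.injOn (Multiset.mem_toFinset.mpr hc)
  rw [mem_roots h0, IsRoot, eval_sub, eval_pow, eval_X, heval, hρ, sub_self]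

variable [DecidableEq m]

lemma exists_mul_self_eq_of_separable_charpoly [IsAlgClosed k] {M : Matrix m m k}
    (hM : M.charpoly.Separable) : ∃ S, S * S = M := by
  obtain ⟨g, h, hg⟩ := exists_dvd_sq_sub_X_of_separable hM
  refine ⟨aeval M g, ?_⟩
  have := congrArg (aeval M) hg
  rwa [map_mul, aeval_self_charpoly, zero_mul, map_sub, map_pow, aeval_X, sub_eq_zero, sq] at this

lemma separable_map_iff_resultant_ne_zero {A : Type*} [CommRing A] {f : A[X]} (hf : f.Monic)
    (φ : A →+* k) : (f.map φ).Separable ↔ φ (resultant f (derivative f)) ≠ 0 := by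
  have hdeg : (derivative (f.map φ)).natDegree ≤ (derivative f).natDegree := by
    rw [derivative_map]
    exact natDegree_map_le
  obtain ⟨d, hd⟩ := Nat.exists_eq_add_of_le hdeg
  rw [← resultant_map_map, ← derivative_map, hd, resultant_add_right_deg _ _ _ _ _ le_rfl,
    ← hf.natDegree_map φ, (hf.map φ).coeff_natDegree, one_pow, one_mul, ← isUnit_iff_ne_zero,
    isUnit_resultant_iff_isCoprime (hf.map φ)]
  rfl

/-- The generic matrix, viewed over any field containing the polynomial ring in its entries, has
distinct eigenvalues, since it specializes to a diagonal matrix with distinct entries. -/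
lemma separable_charpoly_mvPolynomialX_map [Infinite k] {K : Type*} [Field K]
    {ψ : MvPolynomial (m × m) k →+* K} (hψ : Function.Injective ψ) :
    ((mvPolynomialX m m k).map ψ).charpoly.Separable := by
  let d : m ↪ k :=
    ((Fintype.equivFin m).toEmbedding.trans Fin.valEmbedding).trans (Infinite.natEmbedding k)
  have hd : (diagonal d).charpoly.Separable := by
    rw [charpoly_diagonal]
    exact separable_prod_X_sub_C_iff.mpr d.injective
  have hX : (mvPolynomialX m m k).charpoly.Monic := charpoly_monic _
  rw [charpoly_map, separable_map_iff_resultant_ne_zero hX, map_ne_zero_iff ψ hψ]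
  intro h0
  rw [← mvPolynomialX_mapMatrix_eval (diagonal d), RingHom.mapMatrix_apply, charpoly_map,
    separable_map_iff_resultant_ne_zero hX, h0, map_zero] at hd
  exact hd rfl

/-- The squares are Zariski dense, because the generic matrix is a square over the algebraic closure
of the field of rational functions in its entries. -/
lemma mem_zClosure_range_mul_self [Infinite k] {r : ℕ} (M : Matrix (Fin r) (Fin r) k) :
    M ∈ zClosure (Set.range fun S : Matrix (Fin r) (Fin r) k => S * S) := by
  intro P hP
  let R := MvPolynomial (Fin r × Fin r) k
  let K := AlgebraicClosure (FractionRing R)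
  have hψ : Function.Injective (algebraMap R K) := by
    rw [IsScalarTower.algebraMap_eq R (FractionRing R) K]
    exact (algebraMap (FractionRing R) K).injective.comp (IsFractionRing.injective _ _)
  obtain ⟨S, hS⟩ := exists_mul_self_eq_of_separable_charpoly
    (separable_charpoly_mvPolynomialX_map hψ)
  have hPK : algebraMap R K P = 0 := by
    rw [← aeval_mul_self_eq_zero_of_forall_eval (fun S => hP _ ⟨S, rfl⟩) S, hS]
    change IsScalarTower.toAlgHom k R K P = _
    rw [MvPolynomial.aeval_unique (IsScalarTower.toAlgHom k R K)]
    rfl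
  rw [hψ (hPK.trans (map_zero _).symm), map_zero]

end Squares

/-! ### Rank factorizations -/

section RankFactorization

variable {k : Type*} [Field k] {m n : Type*} [Fintype n] {r : ℕ}

lemma rank_add_le (A B : Matrix m n k) : (A + B).rank ≤ A.rank + B.rank := by
  have hrange : LinearMap.range (A + B).mulVecLin ≤
      LinearMap.range A.mulVecLin ⊔ LinearMap.range B.mulVecLin := by
    rw [mulVecLin_add]
    exact LinearMap.range_add_le _ _
  exact (Submodule.finrank_mono hrange).trans (Submodule.finrank_add_le_finrank_add_finrank _ _)

lemma eq_zero_of_rank_eq_zero {M : Matrix m n k} (h : M.rank = 0) : M = 0 := by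
  classical
  have h0 : M.mulVecLin = 0 := LinearMap.range_eq_bot.mp (Submodule.finrank_eq_zero.mp h)
  exact Matrix.toLin'.map_eq_zero_iff.mp h0

lemma rank_mul_eq_of_mul_eq_one {U : Matrix n (Fin r) k} {V L : Matrix (Fin r) n k}
    {R : Matrix n (Fin r) k} (hL : L * U = 1) (hR : V * R = 1) : (U * V).rank = r := by
  refine le_antisymm ?_ ?_
  · simpa using (rank_mul_le_left U V).trans (rank_le_card_width U)
  · have h : L * (U * V) * R = 1 := by
      rw [← Matrix.mul_assoc, hL, Matrix.one_mul, hR]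
    calc r = (L * (U * V) * R).rank := by rw [h, rank_one, Fintype.card_fin]
      _ ≤ _ := (rank_mul_le_left _ _).trans (rank_mul_le_right _ _)

lemma exists_rank_factorization (M : Matrix n n k) (hr : M.rank = r) :
    ∃ (U : Matrix n (Fin r) k) (V : Matrix (Fin r) n k)
      (L : Matrix (Fin r) n k) (R : Matrix n (Fin r) k),
      M = U * V ∧ L * U = 1 ∧ V * R = 1 := by
  classical
  subst hr
  obtain ⟨A, B, e, hA, hB, h⟩ := exists_rank_normal_form M
  have hA' : A⁻¹ * A = 1 := nonsing_inv_mul A ((isUnit_iff_isUnit_det A).mp hA)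
  have hA'' : A * A⁻¹ = 1 := mul_eq_one_comm.mp hA'
  have hB' : B * B⁻¹ = 1 := mul_nonsing_inv B ((isUnit_iff_isUnit_det B).mp hB)
  have hB'' : B⁻¹ * B = 1 := mul_eq_one_comm.mp hB'
  let E : Matrix n (Fin M.rank) k := (fromRows 1 0).submatrix e id
  let E' : Matrix (Fin M.rank) n k := (fromCols 1 0).submatrix id e
  have hEE' : E * E' = A * M * B := by
    rw [h, ← submatrix_mul _ _ _ _ _ Function.bijective_id, fromRows_mul_fromCols]
    simp
  have hE'E : E' * E = 1 := by
    rw [submatrix_mul_equiv, fromCols_mul_fromRows]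
    simp
  refine ⟨A⁻¹ * E, E' * B⁻¹, E' * A, B * E, ?_, ?_, ?_⟩
  · calc M = (A⁻¹ * A) * M * (B * B⁻¹) := by rw [hA', hB', Matrix.one_mul, Matrix.mul_one]
      _ = A⁻¹ * (A * M * B) * B⁻¹ := by simp only [Matrix.mul_assoc]
      _ = _ := by rw [← hEE']; simp only [Matrix.mul_assoc]
  · calc E' * A * (A⁻¹ * E) = E' * (A * A⁻¹) * E := by simp only [Matrix.mul_assoc]
      _ = 1 := by rw [hA'', Matrix.mul_one, hE'E]
  · calc E' * B⁻¹ * (B * E) = E' * (B⁻¹ * B) * E := by simp only [Matrix.mul_assoc]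
      _ = 1 := by rw [hB'', Matrix.mul_one, hE'E]

lemma IsPolyMap.exists_rank_le {F : k → Matrix n n k} (hF : IsPolyMap F) (t₁ : k) :
    ∃ f : k → k, IsPolyFun f ∧ f t₁ ≠ 0 ∧ ∀ t, f t ≠ 0 → (F t₁).rank ≤ (F t).rank := by
  classical
  obtain ⟨U, V, L, R, hUV, hL, hR⟩ := exists_rank_factorization (F t₁) rfl
  refine ⟨_, (((IsPolyMap.const L).mul hF).mul (IsPolyMap.const R)).det, ?_, fun t ht => ?_⟩
  · have : L * F t₁ * R = 1 := by
      calc L * F t₁ * R = L * (U * V) * R := congrArg (L * · * R) hUV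
        _ = 1 := by rw [← Matrix.mul_assoc, hL, Matrix.one_mul, hR]
    simp [this]
  · calc (F t₁).rank = (L * F t * R).rank := by
          rw [rank_of_isUnit _ ((isUnit_iff_isUnit_det _).mpr (IsUnit.mk0 _ ht)), Fintype.card_fin]
      _ ≤ (F t).rank := (rank_mul_le_left _ _).trans (rank_mul_le_right _ _)

end RankFactorization

/-! ### Nilpotent orbits and their tangent spaces -/

section Orbit

variable {k : Type*} [Field k] {N p : ℕ} {lam : Fin p → ℕ}

lemma mul_mul_pow_of_mul_eq_one {m n : Type*} [Fintype m] [Fintype n] [DecidableEq m]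
    [DecidableEq n] {L : Matrix m n k} {R : Matrix n m k} (h : R * L = 1) (x : Matrix n n k) {i : ℕ}
    (hi : 1 ≤ i) : (L * x * R) ^ i = L * x ^ i * R := by
  induction i, hi using Nat.le_induction with
  | base => simp
  | succ i _ ih =>
    rw [pow_succ, ih, pow_succ]
    calc L * x ^ i * R * (L * x * R) = L * x ^ i * (R * L) * x * R := by
          simp only [Matrix.mul_assoc]
      _ = _ := by rw [h, Matrix.mul_one]; simp only [Matrix.mul_assoc]

lemma conj_mem_jordanOrbit {x g g' : Matrix (Fin N) (Fin N) k} (hx : x ∈ jordanOrbit k N lam)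
    (h : g * g' = 1) : g * x * g' ∈ jordanOrbit k N lam := by
  intro i hi
  have h' : g' * g = 1 := mul_eq_one_comm.mp h
  rw [mul_mul_pow_of_mul_eq_one h' x hi, rank_mul_eq_left_of_isUnit_det,
    rank_mul_eq_right_of_isUnit_det, hx i hi]
  · exact (Matrix.isUnit_iff_isUnit_det _).mp (.of_mul_eq_one _ h)
  · exact (Matrix.isUnit_iff_isUnit_det _).mp (.of_mul_eq_one _ h')

lemma rank_pow_of_mem_jordanOrbit (hsum : ∑ l, lam l = N) {x : Matrix (Fin N) (Fin N) k}
    (hx : x ∈ jordanOrbit k N lam) (n : ℕ) : (x ^ n).rank = ∑ l, (lam l - n) := by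
  rcases Nat.eq_zero_or_pos n with rfl | hn
  · simp [hsum]
  · exact hx n hn

lemma sum_tsub_eq_zero_of_le (hsum : ∑ l, lam l = N) {n : ℕ} (hn : N ≤ n) :
    ∑ l, (lam l - n) = 0 :=
  Finset.sum_eq_zero fun l _ => Nat.sub_eq_zero_of_le
    ((Finset.single_le_sum (fun _ _ => Nat.zero_le _) (Finset.mem_univ l)).trans (hsum ▸ hn))

lemma trace_eq_zero_of_mem_jordanOrbit (hsum : ∑ l, lam l = N) {x : Matrix (Fin N) (Fin N) k}
    (hx : x ∈ jordanOrbit k N lam) : x.trace = 0 := by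
  have h : (x ^ N).rank = 0 :=
    (rank_pow_of_mem_jordanOrbit hsum hx N).trans (sum_tsub_eq_zero_of_le hsum le_rfl)
  have hnil : IsNilpotent x := ⟨N, eq_zero_of_rank_eq_zero h⟩
  exact (isNilpotent_trace_of_isNilpotent hnil).eq_zero

lemma smul_mem_jordanOrbit {x : Matrix (Fin N) (Fin N) k} (hx : x ∈ jordanOrbit k N lam)
    {c : k} (hc : c ≠ 0) : c • x ∈ jordanOrbit k N lam := by
  intro i hi
  rw [_root_.smul_pow, rank_smul_of_mem_nonZeroDivisors _
    (mem_nonZeroDivisors_of_ne_zero (pow_ne_zero i hc)), hx i hi]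

lemma adjugate_eq_det_smul_inv {n R : Type*} [Fintype n] [DecidableEq n] [CommRing R]
    {g : Matrix n n R} (h : IsUnit g.det) : g.adjugate = g.det • g⁻¹ := by
  rw [Matrix.inv_def, smul_smul, Ring.mul_inverse_cancel _ h, one_smul]

lemma conj_adjugate_mem_jordanOrbit {x g : Matrix (Fin N) (Fin N) k}
    (hx : x ∈ jordanOrbit k N lam) (h : g.det ≠ 0) :
    g * x * g.adjugate ∈ jordanOrbit k N lam := by
  have h1 : g * g⁻¹ = 1 := Matrix.mul_nonsing_inv g (IsUnit.mk0 _ h)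
  rw [adjugate_eq_det_smul_inv (IsUnit.mk0 _ h), Matrix.mul_smul]
  exact smul_mem_jordanOrbit (conj_mem_jordanOrbit hx h1) h

variable (k N lam) in
/-- The union of the embedded tangent spaces `[gl_N, x]` to the orbit. -/
abbrev tangentUnion : Set (Matrix (Fin N) (Fin N) k) :=
  {M | ∃ a : Matrix (Fin N) (Fin N) k, ∃ x ∈ jordanOrbit k N lam, M = a * x - x * a}

lemma tangentUnion_subset_zClosure_secant [Infinite k] :
    tangentUnion k N lam ⊆
      zClosure (Set.image2 (· + ·) (jordanOrbit k N lam) (jordanOrbit k N lam)) := by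
  rintro _ ⟨a, x, hx, rfl⟩
  have hline := IsPolyMap.line (1 : Matrix (Fin N) (Fin N) k) (1 + a)
  have hF := (IsPolyMap.const (a * x - x * a)).mul hline.adjugate
  have hid : IsPolyFun fun t : k => t := ⟨Polynomial.X, by simp⟩
  obtain ⟨u, hu, hu'⟩ := hid.exists_ne_zero hline.det (s := 1) (t := 0) (by simp) (by simp)
  have key := hF.mem_zClosure
    (S := Set.image2 (· + ·) (jordanOrbit k N lam) (jordanOrbit k N lam))
    (hid.mul hline.det) (mul_ne_zero hu hu') ?_ 0
  · simpa using key
  intro t ht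
  have ht0 : t ≠ 0 := left_ne_zero_of_mul ht
  have hdet := right_ne_zero_of_mul ht
  set g := (1 - t) • (1 : Matrix (Fin N) (Fin N) k) + t • (1 + a) with hg
  refine subset_zClosure ⟨t⁻¹ • (g * x * g.adjugate),
    smul_mem_jordanOrbit (conj_adjugate_mem_jordanOrbit hx hdet) (inv_ne_zero ht0),
    (-(t⁻¹ * g.det)) • x,
    smul_mem_jordanOrbit hx (neg_ne_zero.mpr (mul_ne_zero (inv_ne_zero ht0) hdet)), ?_⟩
  have hcomm : g * x - x * g = t • (a * x - x * a) := by
    have : g = 1 + t • a := by rw [hg]; module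
    rw [this, add_mul, mul_add, Matrix.smul_mul, Matrix.mul_smul, one_mul, mul_one, smul_sub]
    abel
  have hx' : g.det • x = x * g * g.adjugate := by
    rw [Matrix.mul_assoc, Matrix.mul_adjugate, Matrix.mul_smul, Matrix.mul_one]
  have : a * x - x * a = t⁻¹ • (g * x - x * g) := by
    rw [hcomm, smul_smul, inv_mul_cancel₀ ht0, one_smul]
  simp only [this, neg_smul, mul_smul, hx', Matrix.smul_mul, sub_mul, smul_sub]
  abel

end Orbit

/-! ### Secants of orbits of square-zero matrices -/

section SquareZero

variable {k : Type*} [Field k] {N p : ℕ} {lam : Fin p → ℕ} {r : ℕ}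

lemma mem_jordanOrbit_iff_of_sum_eq_zero (h2 : ∑ l, (lam l - 2) = 0)
    {x : Matrix (Fin N) (Fin N) k} :
    x ∈ jordanOrbit k N lam ↔ x * x = 0 ∧ x.rank = ∑ l, (lam l - 1) := by
  have hzero : ∀ i, 2 ≤ i → ∑ l, (lam l - i) = 0 := fun i hi => Nat.le_zero.mp
    (h2 ▸ Finset.sum_le_sum fun l _ => by omega)
  refine ⟨fun hx => ⟨?_, by simpa using hx 1 le_rfl⟩, fun ⟨hsq, hr⟩ i hi => ?_⟩
  · rw [← sq]
    exact eq_zero_of_rank_eq_zero ((hx 2 (by norm_num)).trans h2)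
  · rcases hi.lt_or_eq with hi | rfl
    · rw [hzero i hi, pow_eq_zero_of_le hi (by rw [sq, hsq]), rank_zero]
    · simpa using hr

lemma add_mul_mul_self_mul_mem_tangentUnion (h1 : ∑ l, (lam l - 1) = r)
    (h2 : ∑ l, (lam l - 2) = 0) {U U' : Matrix (Fin N) (Fin r) k} {V V' : Matrix (Fin r) (Fin N) k}
    (hVU : V * U = 0) (hVU' : V' * U' = 0) (hone : V * U' = 1) (hone' : V' * U = 1)
    (S : Matrix (Fin r) (Fin r) k) :
    U * V + U' * (S * S) * V' ∈ tangentUnion k N lam := by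
  have hL : V' * (U - U' * S) = 1 := by
    rw [Matrix.mul_sub, hone', ← Matrix.mul_assoc, hVU', Matrix.zero_mul, sub_zero]
  have hR : (V + S * V') * U' = 1 := by
    rw [Matrix.add_mul, hone, Matrix.mul_assoc, hVU', Matrix.mul_zero, add_zero]
  have hU : (V + S * V') * U = S := by
    rw [Matrix.add_mul, hVU, Matrix.mul_assoc, hone', Matrix.mul_one, zero_add]
  have hsq : (V + S * V') * (U - U' * S) = 0 := by
    rw [Matrix.mul_sub, hU, ← Matrix.mul_assoc, hR, Matrix.one_mul, sub_self]
  refine ⟨U * V', (U - U' * S) * (V + S * V'),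
    (mem_jordanOrbit_iff_of_sum_eq_zero h2).mpr ⟨?_, ?_⟩, ?_⟩
  · rw [Matrix.mul_assoc, ← Matrix.mul_assoc _ (U - U' * S), hsq, Matrix.zero_mul, Matrix.mul_zero]
  · rw [h1, rank_mul_eq_of_mul_eq_one hL hR]
  · have hleft : U * V' * ((U - U' * S) * (V + S * V')) = U * (V + S * V') := by
      rw [Matrix.mul_assoc, ← Matrix.mul_assoc V', hL, Matrix.one_mul]
    have hright : (U - U' * S) * (V + S * V') * (U * V') = (U - U' * S) * S * V' := by
      rw [Matrix.mul_assoc, ← Matrix.mul_assoc _ U, hU, ← Matrix.mul_assoc]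
    rw [hleft, hright]
    simp only [Matrix.mul_add, Matrix.sub_mul, Matrix.mul_assoc]
    abel

lemma add_mem_zClosure_tangentUnion [Infinite k] (h1 : ∑ l, (lam l - 1) = r)
    (h2 : ∑ l, (lam l - 2) = 0) {U U' : Matrix (Fin N) (Fin r) k} {V V' : Matrix (Fin r) (Fin N) k}
    (hVU : V * U = 0) (hVU' : V' * U' = 0) (hA : (V * U').det ≠ 0) (hB : (V' * U).det ≠ 0) :
    U * V + U' * V' ∈ zClosure (tangentUnion k N lam) := by
  set A := V * U' with hAdef
  set B := V' * U with hBdef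
  have hA1 : A * A⁻¹ = 1 := mul_nonsing_inv A (IsUnit.mk0 _ hA)
  have hA2 : A⁻¹ * A = 1 := mul_eq_one_comm.mp hA1
  have hB1 : B * B⁻¹ = 1 := mul_nonsing_inv B (IsUnit.mk0 _ hB)
  have hB2 : B⁻¹ * B = 1 := mul_eq_one_comm.mp hB1
  have hzero : B⁻¹ * V' * (U' * A⁻¹) = 0 := by
    rw [Matrix.mul_assoc, ← Matrix.mul_assoc V', hVU', Matrix.zero_mul, Matrix.mul_zero]
  have hone : V * (U' * A⁻¹) = 1 := by rw [← Matrix.mul_assoc, ← hAdef, hA1]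
  have hone' : B⁻¹ * V' * U = 1 := by rw [Matrix.mul_assoc, ← hBdef, hB2]
  have hsplit : U' * A⁻¹ * (A * B) * (B⁻¹ * V') = U' * V' := by
    calc U' * A⁻¹ * (A * B) * (B⁻¹ * V') = U' * (A⁻¹ * A) * (B * B⁻¹) * V' := by
          simp only [Matrix.mul_assoc]
      _ = U' * V' := by rw [hA2, hB1, Matrix.mul_one, Matrix.mul_one]
  rw [← hsplit]
  refine add_mul_mul_mem_zClosure ?_ (mem_zClosure_range_mul_self (A * B))
  rintro _ ⟨S, rfl⟩
  exact add_mul_mul_self_mul_mem_tangentUnion h1 h2 hVU hzero hone hone' S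

lemma exists_det_ne_zero_and_det_mul_mul_ne_zero [Infinite k] {U R : Matrix (Fin N) (Fin r) k}
    {V L : Matrix (Fin r) (Fin N) k} (hL : L * U = 1) (hR : V * R = 1) :
    ∃ g : Matrix (Fin N) (Fin N) k, g.det ≠ 0 ∧ (V * g * U).det ≠ 0 := by
  have hline := IsPolyMap.line (1 : Matrix (Fin N) (Fin N) k) (R * L)
  have hVU : V * (R * L) * U = 1 := by rw [← Matrix.mul_assoc, hR, Matrix.one_mul, hL]
  obtain ⟨u, hu, hu'⟩ := hline.det.exists_ne_zero
    (((IsPolyMap.const V).mul hline).mul (.const U)).det (s := 0) (t := 1) (by simp) (by simp [hVU])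
  exact ⟨_, hu, hu'⟩

lemma exists_generic_conj [Infinite k] {U U' R R' : Matrix (Fin N) (Fin r) k}
    {V V' L L' : Matrix (Fin r) (Fin N) k}
    (hL : L * U = 1) (hR : V * R = 1) (hL' : L' * U' = 1) (hR' : V' * R' = 1) :
    ∃ g : Matrix (Fin N) (Fin N) k, (V * g * U').det ≠ 0 ∧ (V' * g.adjugate * U).det ≠ 0 := by
  obtain ⟨h, hh, hh'⟩ := exists_det_ne_zero_and_det_mul_mul_ne_zero hL hR'
  have hVU' : V * (R * L') * U' = 1 := by rw [← Matrix.mul_assoc, hR, Matrix.one_mul, hL']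
  have hdet : h⁻¹.det ≠ 0 := by
    rw [det_nonsing_inv, Ring.inverse_eq_inv']
    exact inv_ne_zero hh
  have hV'U : (V' * h⁻¹.adjugate * U).det ≠ 0 := by
    rw [adjugate_eq_det_smul_inv (IsUnit.mk0 _ hdet), nonsing_inv_nonsing_inv _ (IsUnit.mk0 _ hh),
      Matrix.mul_smul, Matrix.smul_mul, det_smul]
    exact mul_ne_zero (pow_ne_zero _ hdet) hh'
  have hline := IsPolyMap.line (R * L') h⁻¹
  obtain ⟨u, hu, hu'⟩ := (((IsPolyMap.const V).mul hline).mul (.const U')).det.exists_ne_zero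
    (((IsPolyMap.const V').mul hline.adjugate).mul (.const U)).det (s := 0) (t := 1)
    (by simp [hVU']) (by simpa using hV'U)
  exact ⟨_, hu, hu'⟩

lemma mul_eq_zero_of_mul_mul_self_eq_zero {U R : Matrix (Fin N) (Fin r) k}
    {V L : Matrix (Fin r) (Fin N) k} (hL : L * U = 1) (hR : V * R = 1) (h : U * V * (U * V) = 0) :
    V * U = 0 := by
  calc V * U = (L * U) * (V * U) * (V * R) := by rw [hL, hR, Matrix.one_mul, Matrix.mul_one]
    _ = L * (U * V * (U * V)) * R := by simp only [Matrix.mul_assoc]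
    _ = 0 := by rw [h, Matrix.mul_zero, Matrix.zero_mul]

lemma secant_subset_of_sum_eq_zero [Infinite k] (h2 : ∑ l, (lam l - 2) = 0) :
    Set.image2 (· + ·) (jordanOrbit k N lam) (jordanOrbit k N lam) ⊆
      zClosure (tangentUnion k N lam) := by
  rintro _ ⟨x, hx, y, hy, rfl⟩
  rw [mem_jordanOrbit_iff_of_sum_eq_zero h2] at hx hy
  obtain ⟨U, V, L, R, rfl, hL, hR⟩ := exists_rank_factorization x hx.2
  obtain ⟨U', V', L', R', rfl, hL', hR'⟩ := exists_rank_factorization y hy.2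
  have hVU := mul_eq_zero_of_mul_mul_self_eq_zero hL hR hx.1
  have hVU' := mul_eq_zero_of_mul_mul_self_eq_zero hL' hR' hy.1
  obtain ⟨g, hA, hB⟩ := exists_generic_conj hL hR hL' hR'
  have hline := IsPolyMap.line (1 : Matrix (Fin N) (Fin N) k) g
  have hF := (IsPolyMap.const (U * V)).add
    ((hline.mul (IsPolyMap.const (U' * V'))).mul hline.adjugate)
  have hf := (((IsPolyMap.const V).mul hline).mul (.const U')).det.mul
    (((IsPolyMap.const V').mul hline.adjugate).mul (.const U)).det
  have key := hF.mem_zClosure (S := tangentUnion k N lam) hf (t₁ := 1) (by simp [hA, hB])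
    (fun t ht => ?_) 0
  · simpa using key
  set g' := (1 - t) • (1 : Matrix (Fin N) (Fin N) k) + t • g
  have hzero : V' * g'.adjugate * (g' * U') = 0 := by
    calc V' * g'.adjugate * (g' * U') = V' * (g'.adjugate * g') * U' := by
          simp only [Matrix.mul_assoc]
      _ = 0 := by
        rw [adjugate_mul, Matrix.mul_smul, Matrix.mul_one, Matrix.smul_mul, hVU', smul_zero]
  have hA' : (V * (g' * U')).det ≠ 0 := by
    rw [← Matrix.mul_assoc]
    exact left_ne_zero_of_mul ht
  have hassoc : g' * (U' * V') * g'.adjugate = g' * U' * (V' * g'.adjugate) := by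
    simp only [Matrix.mul_assoc]
  rw [hassoc]
  exact add_mem_zClosure_tangentUnion rfl h2 hVU hzero hA' (right_ne_zero_of_mul ht)

end SquareZero

/-! ### Traceless matrices with a cyclic vector -/

section Horner

variable {R : Type*} [CommRing R]

lemma coeff_iterate_divX (f : R[X]) (m i : ℕ) : (divX^[m] f).coeff i = f.coeff (i + m) := by
  induction m generalizing i with
  | zero => rfl
  | succ m ih => rw [Function.iterate_succ_apply', coeff_divX, ih]; congr 1; omega

lemma natDegree_iterate_divX (f : R[X]) (m : ℕ) :
    (divX^[m] f).natDegree = f.natDegree - m := by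
  induction m with
  | zero => rfl
  | succ m ih => rw [Function.iterate_succ_apply', natDegree_divX_eq_natDegree_tsub_one, ih]; omega

/-- The powers of `X` up to degree `q + 1`, followed by the quotients of Horner's scheme for `f`.
Both are obtained by multiplying with `X`, up to terms of low degree, and the two sequences fit
together if `f` has no subleading coefficient. -/
def hornerSeq (f : R[X]) (q j : ℕ) : R[X] :=
  if j ≤ q + 1 then X ^ j else divX^[f.natDegree - j] f

variable {f : R[X]} {q i j : ℕ}

lemma hornerSeq_of_le (hj : j ≤ q + 1) : hornerSeq f q j = X ^ j := if_pos hj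

lemma hornerSeq_of_lt (hj : q + 1 < j) : hornerSeq f q j = divX^[f.natDegree - j] f :=
  if_neg hj.not_ge

lemma hornerSeq_natDegree (hq : q + 1 < f.natDegree) : hornerSeq f q f.natDegree = f := by
  rw [hornerSeq_of_lt hq, Nat.sub_self, Function.iterate_zero_apply]

lemma natDegree_hornerSeq [Nontrivial R] (hj : j ≤ f.natDegree) :
    (hornerSeq f q j).natDegree = j := by
  rcases le_or_gt j (q + 1) with h | h
  · rw [hornerSeq_of_le h, natDegree_X_pow]
  · rw [hornerSeq_of_lt h, natDegree_iterate_divX]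
    omega

lemma coeff_hornerSeq (hf : f.Monic) (h0 : f.coeff (f.natDegree - 1) = 0) (hi : q ≤ i)
    (hqj : q < j) (hj : j ≤ f.natDegree) :
    (hornerSeq f q j).coeff i = f.coeff (i + (f.natDegree - j)) := by
  rcases (Nat.succ_le_of_lt hqj).lt_or_eq with hqj | rfl
  · rw [hornerSeq_of_lt hqj, coeff_iterate_divX]
  rw [hornerSeq_of_le le_rfl, coeff_X_pow]
  split_ifs with h
  · rw [h, Nat.succ_eq_add_one, Nat.add_sub_cancel' hj, hf.coeff_natDegree]
  · rcases hi.eq_or_lt with rfl | hi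
    · rw [show q + (f.natDegree - q.succ) = f.natDegree - 1 by omega, h0]
    · rw [coeff_eq_zero_of_natDegree_lt (by omega)]

lemma monic_hornerSeq [Nontrivial R] (hf : f.Monic) (h0 : f.coeff (f.natDegree - 1) = 0)
    (hj : j ≤ f.natDegree) : (hornerSeq f q j).Monic := by
  rcases le_or_gt j q with h | h
  · rw [hornerSeq_of_le (by omega)]
    exact monic_X_pow j
  · rw [Monic, ← coeff_natDegree, natDegree_hornerSeq hj, coeff_hornerSeq hf h0 h.le h hj,
      Nat.add_sub_cancel' hj, hf.coeff_natDegree]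

lemma natDegree_X_mul_hornerSeq_sub_le (hf : f.Monic) (h0 : f.coeff (f.natDegree - 1) = 0)
    (hj : j < f.natDegree) : (X * hornerSeq f q j - hornerSeq f q (j + 1)).natDegree ≤ q := by
  rcases le_or_gt j q with h | h
  · rw [hornerSeq_of_le (by omega), hornerSeq_of_le (by omega), ← pow_succ', sub_self,
      natDegree_zero]
    exact Nat.zero_le q
  · refine natDegree_le_iff_coeff_eq_zero.mpr fun i hi => ?_
    obtain ⟨i, rfl⟩ := Nat.exists_eq_succ_of_ne_zero (by omega : i ≠ 0)
    rw [coeff_sub, coeff_X_mul, coeff_hornerSeq hf h0 (by omega) h hj.le,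
      coeff_hornerSeq hf h0 (by omega) (by omega) hj,
      show i + (f.natDegree - j) = i + 1 + (f.natDegree - (j + 1)) by omega, sub_self]

end Horner

section Shift

variable {k : Type*} [CommRing k] {q n : ℕ}

variable (k q n) in
/-- The partial shift `e_{i + q} ↦ (-1)^i e_i` for `i ≤ q`, with all other basis vectors sent to
zero. The signs turn the sums of diagonals that occur in its commutators into differences. -/
def shiftMatrix : Matrix (Fin n) (Fin n) k :=
  of fun i j => if (j : ℕ) = i + q ∧ (i : ℕ) ≤ q then (-1) ^ (i : ℕ) else 0

lemma mul_shiftMatrix_apply (A : ℕ → ℕ → k) (i j : Fin n) :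
    ((of fun i j : Fin n => A i j) * shiftMatrix k q n) i j =
      if q ≤ j ∧ j ≤ 2 * q then (-1) ^ ((j : ℕ) - q) * A i (j - q) else 0 := by
  rw [Matrix.mul_apply]
  split_ifs with h
  · rw [Finset.sum_eq_single ⟨j - q, by omega⟩]
    · have : (j : ℕ) = j - q + q ∧ (j : ℕ) - q ≤ q := by omega
      simp only [shiftMatrix, of_apply, if_pos this, mul_comm]
    · intro l _ hl
      have : ¬((j : ℕ) = l + q ∧ (l : ℕ) ≤ q) := fun hj => hl (Fin.ext (by simp; omega))
      simp [shiftMatrix, this]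
    · simp
  · refine Finset.sum_eq_zero fun l _ => ?_
    have : ¬((j : ℕ) = l + q ∧ (l : ℕ) ≤ q) := by omega
    simp [shiftMatrix, this]

lemma shiftMatrix_mul_apply (hq : 2 * q < n) (A : ℕ → ℕ → k) (i j : Fin n) :
    (shiftMatrix k q n * of fun i j : Fin n => A i j) i j =
      if (i : ℕ) ≤ q then (-1) ^ (i : ℕ) * A (i + q) j else 0 := by
  rw [Matrix.mul_apply]
  split_ifs with h
  · rw [Finset.sum_eq_single ⟨i + q, by omega⟩]
    · simp [shiftMatrix, h]
    · intro l _ hl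
      have : (l : ℕ) ≠ i + q := fun hj => hl (Fin.ext hj)
      simp [shiftMatrix, this]
    · simp
  · exact Finset.sum_eq_zero fun l _ => by simp [shiftMatrix, h]

lemma exists_commutator_shiftMatrix (hq : 2 * q < n) (hq' : n ≤ 2 * q + 2) {C : ℕ → ℕ → k}
    (hC : ∀ i, ∀ j < n, ¬(i ≤ q ∧ q < j) → C i j = if i = j + 1 then 1 else 0) :
    ∃ a : Matrix (Fin n) (Fin n) k,
      (of fun i j : Fin n => C i j) = a * shiftMatrix k q n - shiftMatrix k q n * a := by
  let A : ℕ → ℕ → k := fun i j =>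
    if i = j + q + 1 then (-1) ^ j
    else if q < j ∧ q ≤ i then -((-1) ^ (i - q) * C (i - q) j) else 0
  refine ⟨of fun i j : Fin n => A i j, ?_⟩
  have hsign : ∀ i : ℕ, (-1 : k) ^ i * (-1) ^ i = 1 := fun i => by
    rw [← mul_pow, neg_one_mul, neg_neg, one_pow]
  ext ⟨i, hi⟩ ⟨j, hj⟩
  rw [Matrix.sub_apply, mul_shiftMatrix_apply, shiftMatrix_mul_apply hq, of_apply]
  have hleft : (if q ≤ j ∧ j ≤ 2 * q then (-1) ^ (j - q) * A i (j - q) else 0) =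
      if q < i ∧ i = j + 1 then 1 else 0 := by
    by_cases h : q < i ∧ i = j + 1
    · rw [if_pos h, if_pos (by omega),
        show A i (j - q) = (-1) ^ (j - q) from if_pos (by omega), hsign]
    · rw [if_neg h]
      refine ite_eq_right_iff.mpr fun hj => ?_
      rw [show A i (j - q) = 0 from (if_neg (by omega)).trans (if_neg (by omega)), mul_zero]
  have hright : (if i ≤ q then (-1) ^ i * A (i + q) j else 0) =
      if i ≤ q then (if q < j then -C i j else if i = j + 1 then -1 else 0) else 0 := by
    refine ite_congr rfl (fun hi => ?_) fun _ => rfl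
    split_ifs with h h'
    · rw [show A (i + q) j = _ from (if_neg (by omega)).trans (if_pos (by omega)),
        Nat.add_sub_cancel, mul_neg, ← mul_assoc, hsign, one_mul]
    · rw [show A (i + q) j = (-1) ^ j from if_pos (by omega), h', pow_succ, mul_neg_one, neg_mul,
        hsign]
    · rw [show A (i + q) j = 0 from (if_neg (by omega)).trans (if_neg (by omega)), mul_zero]
  rw [hleft, hright]
  by_cases hij : i ≤ q ∧ q < j
  · simp [hij.1, hij.2, hij.1.not_gt]
  · rw [hC i j hj hij]
    split_ifs <;> first | omega | simp

end Shift

section Krylov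

variable {k : Type*} [CommRing k] {s q : ℕ} {K : Matrix (Fin s) (Fin s) k} {w : Fin s → k}

/-- The matrix with columns `w, K w, K² w, …`. Its invertibility says that `w` is a cyclic vector
of `K`. -/
def krylovMatrix (K : Matrix (Fin s) (Fin s) k) (w : Fin s → k) : Matrix (Fin s) (Fin s) k :=
  of fun i j => (K ^ (j : ℕ) *ᵥ w) i

lemma krylovMatrix_mulVec_coeff {r : k[X]} (hr : r.natDegree < s) :
    krylovMatrix K w *ᵥ (fun i : Fin s => r.coeff i) = aeval K r *ᵥ w := by
  ext i
  rw [aeval_eq_sum_range' hr, sum_mulVec, Finset.sum_apply, ← Fin.sum_univ_eq_sum_range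
    (fun j => ((r.coeff j • K ^ j) *ᵥ w) i), mulVec, dotProduct]
  refine Finset.sum_congr rfl fun j _ => ?_
  rw [smul_mulVec, Pi.smul_apply, smul_eq_mul, mul_comm, krylovMatrix, of_apply]

/-- The matrix whose columns are the polynomials `hornerSeq K.charpoly q` in `K`, applied to `w`.
In this basis `K` is a subdiagonal shift up to an upper right block. -/
def hornerBasis (K : Matrix (Fin s) (Fin s) k) (w : Fin s → k) (q : ℕ) :
    Matrix (Fin s) (Fin s) k :=
  of fun i j => (aeval K (hornerSeq K.charpoly q j) *ᵥ w) i

lemma coeff_charpoly_natDegree_sub_one (hs : 0 < s) (htr : K.trace = 0) :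
    K.charpoly.coeff (K.charpoly.natDegree - 1) = 0 := by
  have : Nonempty (Fin s) := ⟨⟨0, hs⟩⟩
  nontriviality k
  rw [trace_eq_neg_charpoly_coeff, neg_eq_zero] at htr
  rwa [charpoly_natDegree_eq_dim]

lemma natDegree_charpoly_fin [Nontrivial k] : K.charpoly.natDegree = s := by
  rw [charpoly_natDegree_eq_dim, Fintype.card_fin]

lemma isUnit_det_hornerBasis (hs : 0 < s) (htr : K.trace = 0) (hw : IsUnit (krylovMatrix K w).det) :
    IsUnit (hornerBasis K w q).det := by
  nontriviality k
  have hnat : K.charpoly.natDegree = s := natDegree_charpoly_fin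
  have hdeg : ∀ j : Fin s, (hornerSeq K.charpoly q j).natDegree = j := fun j =>
    natDegree_hornerSeq (by omega)
  have hmonic : ∀ j : Fin s, (hornerSeq K.charpoly q j).Monic := fun j =>
    monic_hornerSeq K.charpoly_monic (coeff_charpoly_natDegree_sub_one hs htr) (by omega)
  have hmul : hornerBasis K w q =
      krylovMatrix K w * of fun i j : Fin s => (hornerSeq K.charpoly q j).coeff i := by
    ext i j
    exact (congrFun (krylovMatrix_mulVec_coeff ((hdeg j).trans_lt j.2)) i).symm
  rwa [hmul, det_mul, det_matrixOfPolynomials _ hdeg hmonic, mul_one]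

lemma mul_hornerBasis [Nontrivial k] (hq : q + 1 < s) (htr : K.trace = 0) :
    K * hornerBasis K w q = hornerBasis K w q * of fun i j : Fin s =>
      (if (i : ℕ) = j + 1 then 1 else 0) +
        (X * hornerSeq K.charpoly q j - hornerSeq K.charpoly q (j + 1)).coeff i := by
  have hnat : K.charpoly.natDegree = s := natDegree_charpoly_fin
  have h0 := coeff_charpoly_natDegree_sub_one (K := K) (by omega) htr
  set p := hornerSeq K.charpoly q with hp
  have hdeg : ∀ j < s, (X * p j - p (j + 1)).natDegree ≤ q := fun j hj =>
    natDegree_X_mul_hornerSeq_sub_le K.charpoly_monic h0 (by omega)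
  ext i j
  have hrem : ∑ l : Fin s, (aeval K (p l) *ᵥ w) i * (X * p j - p (j + 1)).coeff l =
      (aeval K (X * p j - p (j + 1)) *ᵥ w) i := by
    rw [← krylovMatrix_mulVec_coeff ((hdeg j j.2).trans_lt (by omega))]
    refine Finset.sum_congr rfl fun l _ => ?_
    rcases le_or_gt (l : ℕ) q with hl | hl
    · simp [hp, hornerSeq_of_le (hl.trans q.le_succ), krylovMatrix]
    · simp only [coeff_eq_zero_of_natDegree_lt ((hdeg j j.2).trans_lt hl), mul_zero]
  have hnext : ∑ l : Fin s, (aeval K (p l) *ᵥ w) i * (if (l : ℕ) = j + 1 then 1 else 0) =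
      (aeval K (p (j + 1)) *ᵥ w) i := by
    rcases (Nat.succ_le_of_lt j.2).lt_or_eq with hj | hj
    · rw [Finset.sum_eq_single ⟨j + 1, hj⟩]
      · simp
      · exact fun l _ hl => by rw [if_neg fun h => hl (Fin.ext h), mul_zero]
      · simp
    · have hps : p (j + 1) = K.charpoly := by
        rw [show (j : ℕ) + 1 = K.charpoly.natDegree from hj.trans hnat.symm]
        exact hornerSeq_natDegree (by omega)
      rw [hps, aeval_self_charpoly, zero_mulVec, Pi.zero_apply]
      exact Finset.sum_eq_zero fun l _ => by rw [if_neg (by omega), mul_zero]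
  simp only [hornerBasis, Matrix.mul_apply, of_apply, mul_add, Finset.sum_add_distrib]
  rw [hrem, hnext, ← Pi.add_apply, ← add_mulVec, ← map_add, add_sub_cancel, map_mul, aeval_X,
    ← mulVec_mulVec]
  rfl

lemma exists_eq_commutator_conj_shiftMatrix (hs : 2 ≤ s) (hq : 2 * q < s) (hq' : s ≤ 2 * q + 2)
    (htr : K.trace = 0) (hw : IsUnit (krylovMatrix K w).det) :
    ∃ a g g' : Matrix (Fin s) (Fin s) k, g * g' = 1 ∧
      K = a * (g * shiftMatrix k q s * g') - g * shiftMatrix k q s * g' * a := by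
  nontriviality k
  have hnat : K.charpoly.natDegree = s := natDegree_charpoly_fin
  have h0 := coeff_charpoly_natDegree_sub_one (K := K) (by omega) htr
  have hKB := mul_hornerBasis (K := K) (w := w) (q := q) (by omega) htr
  set B := hornerBasis K w q
  have hBB : B * B⁻¹ = 1 := mul_nonsing_inv B (isUnit_det_hornerBasis (by omega) htr hw)
  have hBB' : B⁻¹ * B = 1 := mul_eq_one_comm.mp hBB
  obtain ⟨a, ha⟩ := exists_commutator_shiftMatrix hq hq' (C := fun i j =>
      (if i = j + 1 then 1 else 0) +
        (X * hornerSeq K.charpoly q j - hornerSeq K.charpoly q (j + 1)).coeff i) (by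
    intro i j hj hij
    rcases le_or_gt j q with h | h
    · rw [hornerSeq_of_le (by omega), hornerSeq_of_le (by omega), ← pow_succ', sub_self,
        coeff_zero, add_zero]
    · have hrem := natDegree_X_mul_hornerSeq_sub_le (q := q) K.charpoly_monic h0 (hnat.symm ▸ hj)
      rw [coeff_eq_zero_of_natDegree_lt (by omega), add_zero])
  refine ⟨B * a * B⁻¹, B, B⁻¹, hBB, ?_⟩
  calc K = K * B * B⁻¹ := by rw [Matrix.mul_assoc, hBB, Matrix.mul_one]
    _ = B * a * (B⁻¹ * B) * shiftMatrix k q s * B⁻¹ -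
        B * shiftMatrix k q s * (B⁻¹ * B) * a * B⁻¹ := by
      rw [hKB, ha, hBB']
      simp only [Matrix.mul_sub, Matrix.sub_mul, Matrix.mul_one, Matrix.mul_assoc]
    _ = _ := by simp only [Matrix.mul_assoc]

lemma exists_mul_eq_commutator {N : ℕ} {X : Matrix (Fin N) (Fin s) k} {Y : Matrix (Fin s) (Fin N) k}
    (hs : 2 ≤ s) (hq : 2 * q < s) (hq' : s ≤ 2 * q + 2) (htr : (X * Y).trace = 0)
    (hdet : IsUnit (Y * X).det) (hw : IsUnit (krylovMatrix (Y * X) w).det) :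
    ∃ (a : Matrix (Fin N) (Fin N) k) (X' : Matrix (Fin N) (Fin s) k)
      (L : Matrix (Fin s) (Fin N) k), L * X' = 1 ∧
        X * Y = a * (X' * shiftMatrix k q s * L) - X' * shiftMatrix k q s * L * a := by
  rw [trace_mul_comm] at htr
  obtain ⟨a, g, g', hg, hK⟩ := exists_eq_commutator_conj_shiftMatrix hs hq hq' htr hw
  set K := Y * X
  have hK1 : K * K⁻¹ = 1 := mul_nonsing_inv K hdet
  have hK2 : K⁻¹ * K = 1 := mul_eq_one_comm.mp hK1
  have hg' : g' * g = 1 := mul_eq_one_comm.mp hg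
  have hL : K⁻¹ * Y * X = 1 := by rw [Matrix.mul_assoc, hK2]
  refine ⟨X * a * (K⁻¹ * Y), X * g, g' * (K⁻¹ * Y), ?_, ?_⟩
  · calc g' * (K⁻¹ * Y) * (X * g) = g' * (K⁻¹ * Y * X) * g := by simp only [Matrix.mul_assoc]
      _ = 1 := by rw [hL, Matrix.mul_one, hg']
  · set z := g * shiftMatrix k q s * g'
    calc X * Y = X * (K * K⁻¹) * Y := by rw [hK1, Matrix.mul_one]
      _ = X * (a * z - z * a) * (K⁻¹ * Y) := by rw [← hK]; simp only [Matrix.mul_assoc]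
      _ = X * a * (K⁻¹ * Y * X) * z * (K⁻¹ * Y) - X * z * (K⁻¹ * Y * X) * a * (K⁻¹ * Y) := by
        simp only [hL, Matrix.mul_one, Matrix.mul_sub, Matrix.sub_mul, Matrix.mul_assoc]
      _ = _ := by simp only [z, Matrix.mul_assoc]

lemma IsPolyMap.krylovMatrix {F : k → Matrix (Fin s) (Fin s) k} (hF : IsPolyMap F)
    (w : Fin s → k) : IsPolyMap fun t => krylovMatrix (F t) w := by
  choose G hG using fun j : Fin s =>
    (hF.pow (j : ℕ)).mul (IsPolyMap.const (Matrix.of fun (i : Fin s) (_ : Unit) => w i))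
  refine ⟨Matrix.of fun i j => G j i (), fun t => ?_⟩
  ext i j
  have := congrFun (congrFun (hG j t) i) ()
  simpa [_root_.krylovMatrix, Matrix.mul_apply, mulVec, dotProduct] using this

lemma exists_cyclic_traceless (hs : 2 ≤ s) :
    ∃ (C : Matrix (Fin s) (Fin s) k) (w : Fin s → k),
      C.trace = 0 ∧ IsUnit C.det ∧ IsUnit (krylovMatrix C w).det := by
  obtain ⟨n, rfl⟩ : ∃ n, s = n + 2 := ⟨s - 2, by omega⟩
  let σ : Equiv.Perm (Fin (n + 2)) := (finRotate (n + 2)).symm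
  have hpow : ∀ j (hj : j < n + 2),
      σ.permMatrix k ^ j *ᵥ Pi.single 0 1 = Pi.single (⟨j, hj⟩ : Fin (n + 2)) 1 := by
    intro j
    induction j with
    | zero => intro _; rw [pow_zero, one_mulVec]; rfl
    | succ j ih =>
      intro hj
      rw [pow_succ', ← mulVec_mulVec, ih (by omega)]
      ext i
      have : σ i = ⟨j, by omega⟩ ↔ i = ⟨j + 1, hj⟩ := by
        rw [Equiv.symm_apply_eq, finRotate_of_lt (by omega)]
      simp [Pi.single_apply, this]
  refine ⟨σ.permMatrix k, Pi.single 0 1, ?_, ?_, ?_⟩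
  · refine Finset.sum_eq_zero fun i _ => ?_
    have : σ i ≠ i := fun h => by simpa using (Equiv.symm_apply_eq _).mp h
    simp [Equiv.Perm.permMatrix, PEquiv.toMatrix_apply, this]
  · rw [det_permutation]
    rcases Int.units_eq_one_or (Equiv.Perm.sign σ) with h | h <;> simp [h]
  · have : krylovMatrix (σ.permMatrix k) (Pi.single 0 1) = 1 := by
      ext i j
      rw [krylovMatrix, of_apply, hpow j j.2, Pi.single_apply, Matrix.one_apply]
    simp [this]

end Krylov

/-! ### Matrices with a left inverse -/

section LeftInverse

variable {k : Type*} [Field k] {N s : ℕ}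

lemma exists_fromCols_mul_fromRows_eq_one {m n : Type*} [Fintype m] [DecidableEq m]
    [Fintype n] [DecidableEq n] {X : Matrix n m k} {L : Matrix m n k} (h : L * X = 1) :
    ∃ (r : ℕ) (W : Matrix n (Fin r) k) (W' : Matrix (Fin r) n k),
      fromCols X W * fromRows L W' = 1 ∧ fromRows L W' * fromCols X W = 1 := by
  obtain ⟨W, W', L₁, R₁, hW, hL₁, hR₁⟩ := exists_rank_factorization (1 - X * L) rfl
  have hLX : L * (1 - X * L) = 0 := by
    rw [Matrix.mul_sub, Matrix.mul_one, ← Matrix.mul_assoc, h, Matrix.one_mul, sub_self]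
  have hXL : (1 - X * L) * X = 0 := by
    rw [Matrix.sub_mul, Matrix.one_mul, Matrix.mul_assoc, h, Matrix.mul_one, sub_self]
  have hLW : L * W = 0 := by
    calc L * W = L * (W * W') * R₁ := by
          rw [Matrix.mul_assoc, Matrix.mul_assoc W, hR₁, Matrix.mul_one]
      _ = 0 := by rw [← hW, hLX, Matrix.zero_mul]
  have hW'X : W' * X = 0 := by
    calc W' * X = L₁ * (W * W' * X) := by
          rw [Matrix.mul_assoc, ← Matrix.mul_assoc L₁, hL₁, Matrix.one_mul]
      _ = 0 := by rw [← hW, hXL, Matrix.mul_zero]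
  have hsum : X * L + W * W' = 1 := by rw [← hW, add_sub_cancel]
  have hW'W : W' * W = 1 := by
    calc W' * W = L₁ * (W * W' * W) := by
          rw [Matrix.mul_assoc W, ← Matrix.mul_assoc L₁, hL₁, Matrix.one_mul]
      _ = 1 := by
        rw [← hW, Matrix.sub_mul, Matrix.one_mul, Matrix.mul_assoc, hLW, Matrix.mul_zero, sub_zero,
          hL₁]
  refine ⟨_, W, W', by rw [fromCols_mul_fromRows, hsum], ?_⟩
  rw [fromRows_mul_fromCols, h, hLW, hW'X, hW'W, fromBlocks_one]

lemma exists_extension_of_mul_eq_one {X : Matrix (Fin N) (Fin s) k} {L : Matrix (Fin s) (Fin N) k}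
    (h : L * X = 1) :
    ∃ (hsN : s ≤ N) (g g' : Matrix (Fin N) (Fin N) k), g * g' = 1 ∧
      g.submatrix id (Fin.castLE hsN) = X ∧ g'.submatrix (Fin.castLE hsN) id = L := by
  obtain ⟨r, W, W', h1, h2⟩ := exists_fromCols_mul_fromRows_eq_one h
  obtain rfl : N = s + r := by
    simpa using square_of_invertible _ _ h1 h2
  refine ⟨Nat.le_add_right s r, (fromCols X W).submatrix id finSumFinEquiv.symm,
    (fromRows L W').submatrix finSumFinEquiv.symm id, ?_, ?_, ?_⟩
  · rw [submatrix_mul_equiv, h1, submatrix_id_id]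
  · ext i j
    have : finSumFinEquiv.symm (Fin.castLE (Nat.le_add_right s r) j) = Sum.inl j :=
      finSumFinEquiv_symm_apply_castAdd j
    simp [this]
  · ext i j
    have : finSumFinEquiv.symm (Fin.castLE (Nat.le_add_right s r) i) = Sum.inl i :=
      finSumFinEquiv_symm_apply_castAdd i
    simp [this]

lemma exists_factorization_of_rank_le {M : Matrix (Fin N) (Fin N) k} (hM : M.rank ≤ s)
    (hs : s ≤ N) :
    ∃ (X : Matrix (Fin N) (Fin s) k) (Y L : Matrix (Fin s) (Fin N) k), M = X * Y ∧ L * X = 1 := by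
  obtain ⟨U, V, L, -, hUV, hL, -⟩ := exists_rank_factorization M rfl
  obtain ⟨hr, g, g', hg, rfl, rfl⟩ := exists_extension_of_mul_eq_one hL
  refine ⟨g.submatrix id (Fin.castLE hs),
    (1 : Matrix (Fin s) (Fin s) k).submatrix id (Fin.castLE hM) * V,
    g'.submatrix (Fin.castLE hs) id, ?_, ?_⟩
  · have : g.submatrix id (Fin.castLE hs) * (1 : Matrix (Fin s) (Fin s) k).submatrix id
        (Fin.castLE hM) = g.submatrix id (Fin.castLE hr) := by
      ext i j
      simp [Matrix.mul_apply, Matrix.one_apply]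
    rw [← Matrix.mul_assoc, this]
    exact hUV
  · rw [← submatrix_mul _ _ _ _ _ Function.bijective_id, mul_eq_one_comm.mp hg]
    exact submatrix_one _ (Fin.castLE_injective hs)

lemma exists_mul_shiftMatrix_mul_eq_conj {q : ℕ} (hq : 2 * q < s) {X : Matrix (Fin N) (Fin s) k}
    {L : Matrix (Fin s) (Fin N) k} (h : L * X = 1) :
    ∃ g g' : Matrix (Fin N) (Fin N) k, g * g' = 1 ∧
      X * shiftMatrix k q s * L = g * shiftMatrix k q N * g' := by
  obtain ⟨hsN, g, g', hg, rfl, rfl⟩ := exists_extension_of_mul_eq_one h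
  refine ⟨g, g', hg, ?_⟩
  have hshift : ∀ i j : Fin N, s ≤ i ∨ s ≤ j → shiftMatrix k q N i j = 0 := fun i j h => by
    simp only [shiftMatrix, of_apply]
    exact if_neg (by omega)
  have hrange : ∀ i : Fin N, i ∉ Set.range (Fin.castLE hsN) → s ≤ i := fun i hi => by
    by_contra! his
    exact hi ⟨⟨i, his⟩, rfl⟩
  ext i j
  rw [Matrix.mul_apply, Matrix.mul_apply]
  refine Fintype.sum_of_injective _ (Fin.castLE_injective hsN) _ _ (fun m hm => ?_) fun m => ?_
  · rw [Matrix.mul_apply, Finset.sum_eq_zero fun l _ => by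
      rw [hshift l m (.inr (hrange m hm)), mul_zero], zero_mul]
  · congr 1
    rw [Matrix.mul_apply, Matrix.mul_apply]
    refine Fintype.sum_of_injective _ (Fin.castLE_injective hsN) _ _ (fun l hl => ?_) fun l => rfl
    rw [hshift l _ (.inl (hrange l hl)), mul_zero]

end LeftInverse

/-! ### Bases adapted to chains of subspaces -/

section AdaptedBasis

variable {k V : Type*} [Field k] [AddCommGroup V] [Module k V] [FiniteDimensional k V]
  {S : Set (Submodule k V)}

lemma exists_notMem_span_of_isChain (hS : IsChain (· ≤ ·) S) {m : ℕ} (hm : m < Module.finrank k V)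
    (v : Fin m → V) :
    ∃ u ∉ Submodule.span k (Set.range v), ∀ W ∈ S, m < Module.finrank k W → u ∈ W := by
  let A : Set (Submodule k V) := {W | W ∈ insert ⊤ S ∧ m < Module.finrank k W}
  have hA : A.Nonempty := ⟨⊤, Set.mem_insert _ _, by rwa [finrank_top]⟩
  obtain ⟨W, hWA, hWmin⟩ := WellFounded.has_min (wellFounded_lt (α := Submodule k V)) A hA
  have hW : ¬W ≤ Submodule.span k (Set.range v) := fun h => by
    have h1 := Submodule.finrank_mono h
    have h2 := finrank_range_le_card (R := k) v
    rw [Set.finrank, Fintype.card_fin] at h2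
    exact (hWA.2.trans_le (h1.trans h2)).false
  obtain ⟨u, huW, hu⟩ := SetLike.not_le_iff_exists.mp hW
  refine ⟨u, hu, fun W' hW'S hW' => ?_⟩
  have hchain : IsChain (· ≤ ·) (insert ⊤ S) := hS.insert fun _ _ _ => .inr le_top
  have hW'A : W' ∈ A := ⟨Set.mem_insert_of_mem _ hW'S, hW'⟩
  rcases hchain.total hWA.1 hW'A.1 with h | h
  · exact h huW
  · rwa [← h.lt_or_eq.resolve_left (hWmin W' hW'A)] at huW

lemma exists_linearIndependent_of_isChain (hS : IsChain (· ≤ ·) S) {m : ℕ}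
    (hm : m ≤ Module.finrank k V) :
    ∃ v : Fin m → V, LinearIndependent k v ∧
      ∀ W ∈ S, ∀ j : Fin m, (j : ℕ) < Module.finrank k W → v j ∈ W := by
  induction m with
  | zero => exact ⟨Fin.elim0, linearIndependent_empty_type, fun _ _ j => j.elim0⟩
  | succ m ih =>
    obtain ⟨v, hv, hvS⟩ := ih (by omega)
    obtain ⟨u, hu, huS⟩ := exists_notMem_span_of_isChain hS hm v
    refine ⟨Fin.snoc v u, hv.finSnoc hu, fun W hW j => ?_⟩
    induction j using Fin.lastCases with
    | last => simpa using huS W hW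
    | cast j => simpa using hvS W hW j

lemma exists_basis_of_isChain (hS : IsChain (· ≤ ·) S) {n : ℕ} (hn : Module.finrank k V = n) :
    ∃ b : Module.Basis (Fin n) k V, ∀ W ∈ S,
      W = Submodule.span k (b '' {j | (j : ℕ) < Module.finrank k W}) := by
  obtain ⟨v, hv, hvS⟩ := exists_linearIndependent_of_isChain hS hn.ge
  refine ⟨basisOfLinearIndependentOfCardEqFinrank' v hv (by simp [hn]), fun W hW => Eq.symm ?_⟩
  rw [coe_basisOfLinearIndependentOfCardEqFinrank']
  refine Submodule.eq_of_le_of_finrank_le (Submodule.span_le.mpr ?_) ?_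
  · rintro _ ⟨j, hj, rfl⟩
    exact hvS W hW j hj
  · have hd : Module.finrank k W ≤ n := hn ▸ W.finrank_le
    have hv' : LinearIndependent k (v ∘ Fin.castLE hd) := hv.comp _ (Fin.castLE_injective hd)
    calc Module.finrank k W
        = Module.finrank k (Submodule.span k (Set.range (v ∘ Fin.castLE hd))) := by
          rw [finrank_span_eq_card hv', Fintype.card_fin]
      _ ≤ _ := Submodule.finrank_mono <| Submodule.span_mono <| by
        rintro _ ⟨j, rfl⟩
        exact ⟨_, j.2, rfl⟩

end AdaptedBasis

/-! ### Degeneration of the orbit to a shift matrix -/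

section Degeneration

variable {k : Type*} [Field k] {N : ℕ}

lemma exists_conj_adapted_to_ranges (x : Matrix (Fin N) (Fin N) k) :
    ∃ g g' : Matrix (Fin N) (Fin N) k, g * g' = 1 ∧ ∀ n (i j : Fin N),
      (j : ℕ) < (x ^ n).rank → (x ^ (n + 1)).rank ≤ i → (g * x * g') i j = 0 := by
  let F : ℕ → Submodule k (Fin N → k) := fun n => LinearMap.range (x ^ n).mulVecLin
  have hanti : Antitone F := antitone_nat_of_succ_le fun n => by
    rintro _ ⟨u, rfl⟩
    exact ⟨x *ᵥ u, by simp [pow_succ]⟩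
  have hF : IsChain (· ≤ ·) (Set.range F) := by
    rintro _ ⟨m, rfl⟩ _ ⟨n, rfl⟩ -
    exact (le_total n m).imp (fun h => hanti h) fun h => hanti h
  obtain ⟨b, hb⟩ := exists_basis_of_isChain hF (Module.finrank_fin_fun k)
  let e := Pi.basisFun k (Fin N)
  refine ⟨b.toMatrix e, e.toMatrix b, b.toMatrix_mul_toMatrix_flip e, fun n i j hj hi => ?_⟩
  have hentry : (b.toMatrix e * x * e.toMatrix b) i j = b.repr (x *ᵥ b j) i := by
    have hx : LinearMap.toMatrix e e x.mulVecLin = x := LinearMap.toMatrix_toLin e e x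
    rw [← hx, basis_toMatrix_mul_linearMap_toMatrix_mul_basis_toMatrix, LinearMap.toMatrix_apply,
      mulVecLin_apply, hx]
  have hbj : b j ∈ F n := by
    rw [hb (F n) ⟨n, rfl⟩]
    exact Submodule.subset_span ⟨j, hj, rfl⟩
  have hxb : x *ᵥ b j ∈ F (n + 1) := by
    obtain ⟨u, hu⟩ := hbj
    exact ⟨u, by rw [← hu]; simp [pow_succ']⟩
  rw [hb (F (n + 1)) ⟨n + 1, rfl⟩, b.mem_span_image] at hxb
  rw [hentry]
  by_contra hne
  exact hi.not_gt (hxb (Finsupp.mem_support_iff.mpr hne))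

lemma rank_pow_le_of_flag {r : ℕ → ℕ} {G : Matrix (Fin N) (Fin N) k} (h0 : r 0 = N)
    (hG : ∀ n (i j : Fin N), (j : ℕ) < r n → r (n + 1) ≤ i → G i j = 0) (n : ℕ) :
    (G ^ n).rank ≤ r n := by
  have hpow : ∀ n (i j : Fin N), r n ≤ i → (G ^ n) i j = 0 := by
    intro n
    induction n with
    | zero => intro i j hi; omega
    | succ n ih =>
      intro i j hi
      rw [pow_succ', Matrix.mul_apply]
      refine Finset.sum_eq_zero fun l _ => ?_
      rcases Nat.lt_or_ge l (r n) with hl | hl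
      · rw [hG n i l hl hi, zero_mul]
      · rw [ih l j hl, mul_zero]
  refine (Matrix.rank_le_card_of_support_subset _
    (Finset.univ.filter fun i : Fin N => (i : ℕ) < r n) ?_).trans ?_
  · intro i hi
    by_contra hlt
    refine hi (funext fun j => hpow n i j ?_)
    simpa using hlt
  · calc _ ≤ (Finset.range (r n)).card :=
          Finset.card_le_card_of_injOn (fun i : Fin N => (i : ℕ)) (by intro i; simp)
            (Fin.val_injective.injOn)
      _ = r n := Finset.card_range _

lemma shiftMatrix_apply_eq_zero_of_flag {q : ℕ} {r : ℕ → ℕ} (h0 : q < r 1)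
    (hr : ∀ n, 1 ≤ n → r n ≤ r (n + 1) + q) (n : ℕ) (i j : Fin N) (hj : (j : ℕ) < r n)
    (hi : r (n + 1) ≤ i) : shiftMatrix k q N i j = 0 := by
  refine if_neg fun h => ?_
  rcases Nat.eq_zero_or_pos n with rfl | hn
  · rw [zero_add] at hi
    omega
  · have := hr n hn
    omega

variable {p : ℕ} {lam : Fin p → ℕ}

lemma IsPolyMap.exists_mem_jordanOrbit (hsum : ∑ l, lam l = N) {F : k → Matrix (Fin N) (Fin N) k}
    (hF : IsPolyMap F) {t₁ : k} (ht₁ : F t₁ ∈ jordanOrbit k N lam)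
    (hrank : ∀ t n, (F t ^ n).rank ≤ ∑ l, (lam l - n)) :
    ∃ f : k → k, IsPolyFun f ∧ f t₁ ≠ 0 ∧ ∀ t, f t ≠ 0 → F t ∈ jordanOrbit k N lam := by
  choose f hf hf₁ hfr using fun n => (hF.pow n).exists_rank_le t₁
  refine ⟨_, .prod (Finset.range N) hf, Finset.prod_ne_zero_iff.mpr fun n _ => hf₁ n,
    fun t ht n hn => (hrank t n).antisymm ?_⟩
  rcases lt_or_ge n N with hnN | hnN
  · rw [← ht₁ n hn]
    exact hfr n t (Finset.prod_ne_zero_iff.mp ht n (Finset.mem_range.mpr hnN))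
  · exact (sum_tsub_eq_zero_of_le hsum hnN).trans_le (Nat.zero_le _)

/-- In coordinates adapted to the ranges of the powers of `x`, the ranks of the powers cannot
increase along the segment from the shift matrix to `x`. -/
lemma exists_segment_shiftMatrix_mem_jordanOrbit (hsum : ∑ l, lam l = N)
    {x : Matrix (Fin N) (Fin N) k} (hx : x ∈ jordanOrbit k N lam) {q : ℕ}
    (h0 : q < ∑ l, (lam l - 1))
    (hq : ∀ n, 1 ≤ n → ∑ l, (lam l - n) ≤ ∑ l, (lam l - (n + 1)) + q) :
    ∃ x' : Matrix (Fin N) (Fin N) k, ∃ f : k → k, IsPolyFun f ∧ f 1 ≠ 0 ∧ ∀ t, f t ≠ 0 →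
      (1 - t) • shiftMatrix k q N + t • x' ∈ jordanOrbit k N lam := by
  obtain ⟨g, g', hg, hflag⟩ := exists_conj_adapted_to_ranges x
  simp only [rank_pow_of_mem_jordanOrbit hsum hx] at hflag
  refine ⟨g * x * g', (IsPolyMap.line _ _).exists_mem_jordanOrbit hsum ?_ fun t n => ?_⟩
  · simpa using conj_mem_jordanOrbit hx hg
  · refine rank_pow_le_of_flag (r := fun n => ∑ l, (lam l - n)) (by simpa using hsum) ?_ n
    intro n i j hj hi
    simp [hflag n i j hj hi,
      shiftMatrix_apply_eq_zero_of_flag (r := fun n => ∑ l, (lam l - n)) h0 hq n i j hj hi]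

lemma commutator_conj_shiftMatrix_mem_zClosure_tangentUnion [Infinite k]
    (hsum : ∑ l, lam l = N) {x : Matrix (Fin N) (Fin N) k} (hx : x ∈ jordanOrbit k N lam) {q : ℕ}
    (h0 : q < ∑ l, (lam l - 1))
    (hq : ∀ n, 1 ≤ n → ∑ l, (lam l - n) ≤ ∑ l, (lam l - (n + 1)) + q)
    (a : Matrix (Fin N) (Fin N) k) {g g' : Matrix (Fin N) (Fin N) k} (hg : g * g' = 1) :
    a * (g * shiftMatrix k q N * g') - g * shiftMatrix k q N * g' * a ∈
      zClosure (tangentUnion k N lam) := by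
  obtain ⟨x', f, hf, hf₁, hmem⟩ := exists_segment_shiftMatrix_mem_jordanOrbit hsum hx h0 hq
  have hconj := ((IsPolyMap.const g).mul (.line (shiftMatrix k q N) x')).mul (.const g')
  have hcomm := ((IsPolyMap.const a).mul hconj).sub (hconj.mul (.const a))
  simpa using hcomm.mem_zClosure hf hf₁ (S := tangentUnion k N lam)
    (fun t ht => subset_zClosure ⟨a, _, conj_mem_jordanOrbit (hmem t ht) hg, rfl⟩) 0

end Degeneration

/-! ### Secants of orbits of matrices which are not square-zero -/

section Secant

variable {k : Type*} [Field k] {N p : ℕ} {lam : Fin p → ℕ}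

lemma exists_shift_parameters (hsum : ∑ l, lam l = N) (h2 : ∑ l, (lam l - 2) ≠ 0) :
    ∃ s q, 2 ≤ s ∧ s ≤ N ∧ 2 * q < s ∧ s ≤ 2 * q + 2 ∧ min (2 * ∑ l, (lam l - 1)) N ≤ s ∧
      q < ∑ l, (lam l - 1) ∧
      ∀ n, 1 ≤ n → ∑ l, (lam l - n) ≤ ∑ l, (lam l - (n + 1)) + q := by
  have h21 : ∑ l, (lam l - 2) < ∑ l, (lam l - 1) := by
    obtain ⟨l, -, hl⟩ := Finset.exists_ne_zero_of_sum_ne_zero h2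
    exact Finset.sum_lt_sum (fun i _ => by omega) ⟨l, Finset.mem_univ l, by omega⟩
  have hconv : ∀ n, ∑ l, (lam l - n) + ∑ l, (lam l - 1) ≤ ∑ l, (lam l - (n + 1)) + N := by
    intro n
    rw [← hsum, ← Finset.sum_add_distrib, ← Finset.sum_add_distrib]
    exact Finset.sum_le_sum fun l _ => by omega
  have h10 : ∑ l, (lam l - 1) ≤ N := hsum ▸ Finset.sum_le_sum fun l _ => Nat.sub_le _ _
  rcases le_or_gt (2 * ∑ l, (lam l - 1)) N with h | h
  · refine ⟨2 * ∑ l, (lam l - 1), ∑ l, (lam l - 1) - 1, by omega, by omega, by omega, by omega,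
      by omega, by omega, fun n hn => ?_⟩
    rcases hn.lt_or_eq with hn | rfl
    · have : ∑ l, (lam l - n) ≤ ∑ l, (lam l - 2) := Finset.sum_le_sum fun l _ => by omega
      omega
    · rw [one_add_one_eq_two]
      omega
  · refine ⟨N, (N - 1) / 2, by omega, by omega, by omega, by omega, by omega, by omega,
      fun n _ => ?_⟩
    have := hconv n
    omega

/-- Deforming the second factor of a rank factorization `M = X * Y` makes `Y * X` cyclic, and then
`M` is a commutator with a conjugate of the shift matrix. -/
lemma mem_zClosure_tangentUnion_of_rank_le [Infinite k] (hsum : ∑ l, lam l = N)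
    (h : (jordanOrbit k N lam).Nonempty) {s q : ℕ} (hs : 2 ≤ s) (hsN : s ≤ N) (hq : 2 * q < s)
    (hq' : s ≤ 2 * q + 2) (h0 : q < ∑ l, (lam l - 1))
    (hlam : ∀ n, 1 ≤ n → ∑ l, (lam l - n) ≤ ∑ l, (lam l - (n + 1)) + q)
    {M : Matrix (Fin N) (Fin N) k} (htr : M.trace = 0) (hM : M.rank ≤ s) :
    M ∈ zClosure (tangentUnion k N lam) := by
  obtain ⟨x, hx⟩ := h
  obtain ⟨X, Y, L, rfl, hLX⟩ := exists_factorization_of_rank_le hM hsN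
  obtain ⟨C, w, hCtr, hCdet, hCw⟩ := exists_cyclic_traceless (k := k) hs
  have hline := IsPolyMap.line Y (C * L)
  have hYX := hline.mul (.const X)
  have hCLX : C * L * X = C := by rw [Matrix.mul_assoc, hLX, Matrix.mul_one]
  have hkey := ((IsPolyMap.const X).mul hline).mem_zClosure (S := tangentUnion k N lam)
    (hYX.det.mul (hYX.krylovMatrix w).det) (t₁ := 1) (by simp [hCLX, hCdet.ne_zero, hCw.ne_zero])
    (fun t ht => ?_) 0
  · simpa using hkey
  have htr' : (X * ((1 - t) • Y + t • (C * L))).trace = 0 := by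
    rw [Matrix.mul_add, Matrix.mul_smul, Matrix.mul_smul, trace_add, trace_smul, trace_smul, htr,
      trace_mul_comm X (C * L), hCLX, hCtr]
    simp
  obtain ⟨a, X', L', hL', heq⟩ := exists_mul_eq_commutator hs hq hq' htr'
    (IsUnit.mk0 _ (left_ne_zero_of_mul ht)) (IsUnit.mk0 _ (right_ne_zero_of_mul ht))
  obtain ⟨g, g', hg, hconj⟩ := exists_mul_shiftMatrix_mul_eq_conj hq hL'
  rw [heq, hconj]
  exact commutator_conj_shiftMatrix_mem_zClosure_tangentUnion hsum hx h0 hlam a hg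

lemma secant_subset_of_sum_ne_zero [Infinite k] (hsum : ∑ l, lam l = N)
    (h2 : ∑ l, (lam l - 2) ≠ 0) :
    Set.image2 (· + ·) (jordanOrbit k N lam) (jordanOrbit k N lam) ⊆
      zClosure (tangentUnion k N lam) := by
  rintro _ ⟨x, hx, y, hy, rfl⟩
  obtain ⟨s, q, hs, hsN, hq, hq', hmin, h0, hlam⟩ := exists_shift_parameters hsum h2
  have hrank : ∀ z ∈ jordanOrbit k N lam, z.rank = ∑ l, (lam l - 1) := fun z hz => by
    simpa using hz 1 le_rfl
  refine mem_zClosure_tangentUnion_of_rank_le hsum ⟨x, hx⟩ hs hsN hq hq' h0 hlam ?_ ?_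
  · rw [trace_add, trace_eq_zero_of_mem_jordanOrbit hsum hx,
      trace_eq_zero_of_mem_jordanOrbit hsum hy, add_zero]
  · refine le_trans (le_min ?_ ?_) hmin
    · calc (x + y).rank ≤ x.rank + y.rank := rank_add_le x y
        _ = 2 * ∑ l, (lam l - 1) := by rw [hrank x hx, hrank y hy, two_mul]
    · simpa using (x + y).rank_le_card_width

end Secant

theorem stmt13_general {k : Type*} [Field k] [Infinite k] {N p : ℕ} (lam : Fin p → ℕ)
    (hsum : ∑ l, lam l = N) :
    zClosure (Set.image2 (· + ·) (jordanOrbit k N lam) (jordanOrbit k N lam))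
      = zClosure {M : Matrix (Fin N) (Fin N) k |
          ∃ a : Matrix (Fin N) (Fin N) k, ∃ x ∈ jordanOrbit k N lam, M = a * x - x * a} := by
  refine (zClosure_subset_zClosure ?_).antisymm
    (zClosure_subset_zClosure tangentUnion_subset_zClosure_secant)
  by_cases h2 : ∑ l, (lam l - 2) = 0
  · exact secant_subset_of_sum_eq_zero h2
  · exact secant_subset_of_sum_ne_zero hsum h2

/-- The conical secant variety of a nilpotent orbit `O_λ ⊂ sl_N` coincides with the
closure of the union of its embedded tangent spaces `[gl_N, x]`, i.e. with the closure
of the image of the moment map of the cotangent bundle of the orbit. -/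
theorem stmt13 {k : Type*} [Field k] [IsAlgClosed k] [CharZero k]
    {N p : ℕ} (lam : Fin p → ℕ)
    (hanti : Antitone lam) (hpos : ∀ l, 1 ≤ lam l)
    (hsum : ∑ l, lam l = N) :
    zClosure (Set.image2 (· + ·) (jordanOrbit k N lam) (jordanOrbit k N lam))
      = zClosure {M : Matrix (Fin N) (Fin N) k |
          ∃ a : Matrix (Fin N) (Fin N) k, ∃ x ∈ jordanOrbit k N lam,
            M = a * x - x * a} :=
  stmt13_general lam hsum
end
end

section
/- Let k be an algebraically closed field of characteristic 0 and r ≥ 1. Then the Zariski closure in Mat_{2n}(k) of the set {x₁ + x₂ + … + x_r : each x_i ∈ sp_{2n}(k) with rank(x_i) ≤ 1} equals {M ∈ sp_{2n}(k) : rank(M) ≤ r}. (Equivalently: the affine cone over the r-th secant variety of the projectivized minimal nilpotent orbit of sp_{2n} is the set of symplectic matrices of rank at most r.) -/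
/-!
Multiplication by an invertible skew-symmetric `J` identifies the matrices skew-adjoint for `J` with
the symmetric matrices and preserves rank. Over a field in which `2` is nonzero, a symmetric form
has an orthogonal basis, so a symmetric matrix of rank `r` is a combination of `r` squares `v vᵀ`.
Hence the sums of `r` skew-adjoint matrices of rank at most one already are all the skew-adjoint
matrices of rank at most `r`. Those form a Zariski closed set, cut out by linear equations and by
the vanishing of the minors of size `r + 1`.
-/

open Matrix

noncomputable section

/-- The standard symplectic form matrix `J = [[0, I_n], [−I_n, 0]]`. -/
def Jmat (k : Type*) [CommRing k] (n : ℕ) : Matrix (Fin (2 * n)) (Fin (2 * n)) k :=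
  Matrix.of fun i j =>
    if (i : ℕ) + n = (j : ℕ) then 1 else if (j : ℕ) + n = (i : ℕ) then -1 else 0

/-- The symplectic Lie algebra `sp_{2n}(k) = {M : Mᵀ J + J M = 0}`. -/
def spSet (k : Type*) [CommRing k] (n : ℕ) : Set (Matrix (Fin (2 * n)) (Fin (2 * n)) k) :=
  {M | Mᵀ * Jmat k n + Jmat k n * M = 0}

section ZariskiClosed

variable {k : Type*} {N : ℕ}

/-- A set of matrices is Zariski closed if it equals its Zariski closure `zClosure`. -/
def IsZClosed [CommRing k] (S : Set (Matrix (Fin N) (Fin N) k)) : Prop :=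
  zClosure S = S

lemma subset_zClosure_s19 [CommRing k] (S : Set (Matrix (Fin N) (Fin N) k)) : S ⊆ zClosure S :=
  fun M hM _ hP => hP M hM

lemma zClosure_mono [CommRing k] {S T : Set (Matrix (Fin N) (Fin N) k)} (h : S ⊆ T) :
    zClosure S ⊆ zClosure T :=
  fun _ hM P hP => hM P fun x hx => hP x (h hx)

lemma IsZClosed.inter [CommRing k] {S T : Set (Matrix (Fin N) (Fin N) k)}
    (hS : IsZClosed S) (hT : IsZClosed T) : IsZClosed (S ∩ T) :=
  Set.Subset.antisymm
    (Set.subset_inter ((zClosure_mono Set.inter_subset_left).trans hS.subset)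
      ((zClosure_mono Set.inter_subset_right).trans hT.subset))
    (subset_zClosure_s19 _)

lemma isZClosed_of_mem_iff_eval_eq_zero [CommRing k] {ι : Type*}
    {S : Set (Matrix (Fin N) (Fin N) k)} (P : ι → MvPolynomial (Fin N × Fin N) k)
    (h : ∀ M, M ∈ S ↔ ∀ i, MvPolynomial.eval (fun q => M q.1 q.2) (P i) = 0) : IsZClosed S :=
  Set.Subset.antisymm
    (fun M hM => (h M).2 fun i => hM (P i) fun x hx => (h x).1 hx i) (subset_zClosure_s19 S)

lemma isZClosed_submodule [Field k] (V : Submodule k (Matrix (Fin N) (Fin N) k)) :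
    IsZClosed (V : Set (Matrix (Fin N) (Fin N) k)) := by
  let linearForm (φ : Module.Dual k (Matrix (Fin N) (Fin N) k)) :
      MvPolynomial (Fin N × Fin N) k :=
    ∑ i, ∑ j, MvPolynomial.C (φ (single i j 1)) * MvPolynomial.X (i, j)
  have eval_linearForm (φ M) :
      MvPolynomial.eval (fun q => M q.1 q.2) (linearForm φ) = φ M := by
    conv_rhs => rw [matrix_eq_sum_single M]
    simp only [linearForm, map_sum, map_mul, MvPolynomial.eval_C, MvPolynomial.eval_X]
    refine Finset.sum_congr rfl fun i _ => Finset.sum_congr rfl fun j _ => ?_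
    rw [mul_comm, ← smul_eq_mul, ← map_smul, smul_single, smul_eq_mul, mul_one]
  refine isZClosed_of_mem_iff_eval_eq_zero (fun φ : V.dualAnnihilator => linearForm φ) fun M => ?_
  simp only [eval_linearForm, SetLike.mem_coe, Subtype.forall,
    Subspace.forall_mem_dualAnnihilator_apply_eq_zero_iff]

end ZariskiClosed

section Rank

variable {K m n : Type*} [Field K] [Fintype n]

lemma rank_add_le_rank_add_rank (A B : Matrix m n K) : (A + B).rank ≤ A.rank + B.rank := by
  rw [Matrix.rank, mulVecLin_add]
  exact (Submodule.finrank_mono (LinearMap.range_add_le _ _)).trans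
    (Submodule.finrank_add_le_finrank_add_finrank _ _)

lemma rank_sum_le_sum_rank {ι : Type*} (s : Finset ι) (A : ι → Matrix m n K) :
    (∑ i ∈ s, A i).rank ≤ ∑ i ∈ s, (A i).rank :=
  Finset.le_sum_of_subadditive (fun B : Matrix m n K => B.rank) rank_zero.le
    rank_add_le_rank_add_rank s A

variable [Finite m]

lemma exists_linearIndependent_row_submatrix {d : ℕ} (A : Matrix m n K) (hd : d ≤ A.rank) :
    ∃ f : Fin d → m, LinearIndependent K (A.submatrix f id).row := by
  obtain ⟨b, hb_mem, -, hb⟩ := Submodule.exists_fun_fin_finrank_span_eq K (Set.range A.row)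
  rw [rank_eq_finrank_span_row] at hd
  choose f hf using fun i : Fin d => hb_mem (Fin.castLE hd i)
  have hrow : (A.submatrix f id).row = b ∘ Fin.castLE hd := funext hf
  exact ⟨f, hrow ▸ hb.comp _ (Fin.castLE_injective hd)⟩

lemma exists_det_submatrix_ne_zero {d : ℕ} (A : Matrix m n K) (hd : d ≤ A.rank) :
    ∃ (f : Fin d → m) (g : Fin d → n), (A.submatrix f g).det ≠ 0 := by
  obtain ⟨f, hf⟩ := exists_linearIndependent_row_submatrix A hd
  have hrank : (A.submatrix f id)ᵀ.rank = d := by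
    rw [rank_transpose, hf.rank_matrix, Fintype.card_fin]
  obtain ⟨g, hg⟩ := exists_linearIndependent_row_submatrix _ hrank.ge
  refine ⟨f, g, ?_⟩
  rw [← det_transpose]
  exact ((isUnit_iff_isUnit_det _).1 (linearIndependent_rows_iff_isUnit.1 hg)).ne_zero

lemma rank_le_iff_det_submatrix_eq_zero {r : ℕ} (A : Matrix m n K) :
    A.rank ≤ r ↔
      ∀ (f : Fin (r + 1) → m) (g : Fin (r + 1) → n), (A.submatrix f g).det = 0 := by
  refine ⟨fun hA f g => ?_, fun h => ?_⟩
  · by_contra hdet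
    have hrank : (A.submatrix f g).rank = r + 1 := by
      rw [rank_of_det_ne_zero hdet, Fintype.card_fin]
    have hle := rank_submatrix_le A f g
    omega
  · by_contra! hlt
    obtain ⟨f, g, hfg⟩ := exists_det_submatrix_ne_zero A (Nat.succ_le_of_lt hlt)
    exact hfg (h f g)

end Rank

lemma isZClosed_setOf_rank_le (k : Type*) [Field k] (N r : ℕ) :
    IsZClosed {M : Matrix (Fin N) (Fin N) k | M.rank ≤ r} := by
  refine isZClosed_of_mem_iff_eval_eq_zero
    (fun fg : (Fin (r + 1) → Fin N) × (Fin (r + 1) → Fin N) =>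
      ((mvPolynomialX (Fin N) (Fin N) k).submatrix fg.1 fg.2).det) fun M => ?_
  have eval_minor (f g : Fin (r + 1) → Fin N) :
      MvPolynomial.eval (fun q => M q.1 q.2)
        ((mvPolynomialX (Fin N) (Fin N) k).submatrix f g).det = (M.submatrix f g).det := by
    rw [RingHom.map_det, RingHom.mapMatrix_apply, ← submatrix_map, ← RingHom.mapMatrix_apply,
      mvPolynomialX_mapMatrix_eval]
  simp only [Set.mem_ofPred_eq, rank_le_iff_det_submatrix_eq_zero, Prod.forall, eval_minor]

section Symmetric

lemma transpose_mul_diagonal_mul_eq_sum {R m n : Type*} [CommSemiring R] [Fintype m]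
    [DecidableEq m] (Q : Matrix m n R) (d : m → R) :
    Qᵀ * diagonal d * Q = ∑ i, d i • vecMulVec (Q i) (Q i) := by
  ext a b
  rw [mul_apply, Matrix.sum_apply]
  simp only [mul_diagonal, transpose_apply, Matrix.smul_apply, vecMulVec_apply, smul_eq_mul]
  exact Finset.sum_congr rfl fun i _ => by ring

variable {K n : Type*} [Field K] [NeZero (2 : K)] [Fintype n]

lemma exists_eq_transpose_mul_diagonal_mul [DecidableEq n] {S : Matrix n n K} (hS : S.IsSymm) :
    ∃ (Q : Matrix n n K) (d : n → K), IsUnit Q.det ∧ S = Qᵀ * diagonal d * Q := by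
  have : Invertible (2 : K) := invertibleOfNonzero two_ne_zero
  obtain ⟨b, hb⟩ := LinearMap.BilinForm.exists_orthogonal_basis
    (LinearMap.BilinForm.isSymm_iff.1 (isSymm_toBilin'_iff_isSymm.2 hS))
  let v := b.reindex (Fintype.equivOfCardEq (by simp) : Fin (Module.finrank K (n → K)) ≃ n)
  have hv (i j) (hij : i ≠ j) : S.toBilin' (v i) (v j) = 0 := by
    simpa [v] using hb ((Equiv.injective _).ne hij)
  have hdiag : LinearMap.BilinForm.toMatrix v S.toBilin' =
      diagonal fun i => S.toBilin' (v i) (v i) := by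
    ext i j
    rw [LinearMap.BilinForm.toMatrix_apply]
    obtain rfl | hij := eq_or_ne i j
    · rw [diagonal_apply_eq]
    · rw [hv i j hij, diagonal_apply_ne _ hij]
  refine ⟨v.toMatrix (Pi.basisFun K n), fun i => S.toBilin' (v i) (v i), ?_, ?_⟩
  · exact (isUnit_iff_isUnit_det _).1
      (IsUnit.of_mul_eq_one _ (v.toMatrix_mul_toMatrix_flip (Pi.basisFun K n)))
  · rw [← hdiag, LinearMap.BilinForm.toMatrix_mul_basis_toMatrix]
    ext i j
    simp

lemma exists_eq_sum_smul_vecMulVec_self {r : ℕ} {S : Matrix n n K} (hS : S.IsSymm)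
    (hr : S.rank ≤ r) :
    ∃ (c : Fin r → K) (v : Fin r → n → K), S = ∑ i, c i • vecMulVec (v i) (v i) := by
  classical
  obtain ⟨Q, d, hQ, rfl⟩ := exists_eq_transpose_mul_diagonal_mul hS
  have hcard : Fintype.card {i // d i ≠ 0} ≤ Fintype.card (Fin r) := by
    rwa [rank_mul_eq_left_of_isUnit_det _ _ hQ,
      rank_mul_eq_right_of_isUnit_det _ _ (by rwa [det_transpose]), rank_diagonal,
      ← Fintype.card_fin r] at hr
  obtain ⟨f⟩ := Function.Embedding.nonempty_of_card_le hcard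
  refine ⟨Function.extend f (fun i => d i) 0, Function.extend f (fun i => Q i) 0, ?_⟩
  calc Qᵀ * diagonal d * Q
      = ∑ i, d i • vecMulVec (Q i) (Q i) := transpose_mul_diagonal_mul_eq_sum Q d
    _ = ∑ i : {i // d i ≠ 0}, d i • vecMulVec (Q i) (Q i) := by
        refine (Fintype.sum_of_injective _ Subtype.val_injective _ _ (fun i hi => ?_)
          fun _ => rfl).symm
        have hdi : d i = 0 := by simpa using hi
        rw [hdi, zero_smul]
    _ = _ := by
        refine Fintype.sum_of_injective f f.injective _ _ (fun j hj => ?_) fun i => ?_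
        · rw [Function.extend_apply' _ _ _ hj, Pi.zero_apply, zero_smul]
        · rw [f.injective.extend_apply, f.injective.extend_apply]

end Symmetric

section SkewAdjoint

variable {K n : Type*} [Fintype n]

lemma isSkewAdjoint_iff_isSymm_mul [CommRing K] {J : Matrix n n K} (hJ : Jᵀ = -J)
    {M : Matrix n n K} : J.IsSkewAdjoint M ↔ (J * M).IsSymm := by
  rw [Matrix.IsSkewAdjoint, IsAdjointPair, Matrix.IsSymm, transpose_mul, hJ, mul_neg, mul_neg,
    neg_eq_iff_eq_neg]

variable [Field K] [NeZero (2 : K)] [DecidableEq n] {J : Matrix n n K}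

lemma exists_eq_sum_of_isSkewAdjoint (hJ : Jᵀ = -J) (hJ_det : IsUnit J.det) {r : ℕ}
    {M : Matrix n n K} (hM : J.IsSkewAdjoint M) (hr : M.rank ≤ r) :
    ∃ x : Fin r → Matrix n n K, (∀ i, J.IsSkewAdjoint (x i) ∧ (x i).rank ≤ 1) ∧ M = ∑ i, x i := by
  obtain ⟨c, v, hcv⟩ := exists_eq_sum_smul_vecMulVec_self
    ((isSkewAdjoint_iff_isSymm_mul hJ).1 hM) ((rank_mul_le_right J M).trans hr)
  refine ⟨fun i => J⁻¹ * c i • vecMulVec (v i) (v i), fun i => ⟨?_, ?_⟩, ?_⟩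
  · rw [isSkewAdjoint_iff_isSymm_mul hJ, mul_nonsing_inv_cancel_left _ _ hJ_det]
    exact IsSymm.smul (transpose_vecMulVec _ _) _
  · refine (rank_mul_le_right _ _).trans ?_
    rw [← smul_vecMulVec]
    exact rank_vecMulVec_le _ _
  · rw [← Finset.mul_sum, ← hcv, nonsing_inv_mul_cancel_left _ _ hJ_det]

lemma exists_eq_sum_iff_isSkewAdjoint_and_rank_le (hJ : Jᵀ = -J) (hJ_det : IsUnit J.det) {r : ℕ}
    {M : Matrix n n K} :
    (∃ x : Fin r → Matrix n n K,
        (∀ i, J.IsSkewAdjoint (x i) ∧ (x i).rank ≤ 1) ∧ M = ∑ i, x i) ↔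
      J.IsSkewAdjoint M ∧ M.rank ≤ r := by
  refine ⟨?_, fun ⟨hM, hr⟩ => exists_eq_sum_of_isSkewAdjoint hJ hJ_det hM hr⟩
  rintro ⟨x, hx, rfl⟩
  simp only [← mem_skewAdjointMatricesSubmodule] at hx ⊢
  refine ⟨Submodule.sum_mem _ fun i _ => (hx i).1, ?_⟩
  calc (∑ i, x i).rank ≤ ∑ i, (x i).rank := rank_sum_le_sum_rank _ _
    _ ≤ ∑ _i : Fin r, 1 := Finset.sum_le_sum fun i _ => (hx i).2
    _ = r := by simp

end SkewAdjoint

lemma isZClosed_setOf_isSkewAdjoint {k : Type*} [Field k] {N : ℕ}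
    (J : Matrix (Fin N) (Fin N) k) : IsZClosed {M | J.IsSkewAdjoint M} := by
  have hJ : {M | J.IsSkewAdjoint M} = (skewAdjointMatricesSubmodule J : Set _) :=
    Set.ext fun _ => (mem_skewAdjointMatricesSubmodule _ _).symm
  exact hJ ▸ isZClosed_submodule _

section StandardForm

variable (k : Type*) [CommRing k] (n : ℕ)

lemma exists_Jmat_eq_reindex_neg_J :
    ∃ e : Fin n ⊕ Fin n ≃ Fin (2 * n), Jmat k n = reindex e e (-J (Fin n) k) := by
  let e : Fin n ⊕ Fin n ≃ Fin (2 * n) := finSumFinEquiv.trans (finCongr (two_mul n).symm)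
  refine ⟨e, (Equiv.symm_apply_eq (reindex e e)).1 ?_⟩
  have add_ne (a b : Fin n) : (a : ℕ) + n ≠ b := by omega
  have add_add_ne (a b : Fin n) : (a : ℕ) + n + n ≠ b := by omega
  ext (i | i) (j | j) <;>
    simp [e, Jmat, J, one_apply, Fin.ext_iff, add_ne, add_add_ne, apply_ite (Neg.neg : k → k),
      eq_comm (a := (j : ℕ))]

lemma transpose_Jmat : (Jmat k n)ᵀ = -Jmat k n := by
  obtain ⟨e, he⟩ := exists_Jmat_eq_reindex_neg_J k n
  rw [he, transpose_reindex, transpose_neg, J_transpose]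
  rfl

lemma isUnit_det_Jmat : IsUnit (Jmat k n).det := by
  obtain ⟨e, he⟩ := exists_Jmat_eq_reindex_neg_J k n
  rw [he, det_reindex_self, det_neg]
  exact (isUnit_one.neg.pow _).mul (isUnit_det_J _ _)

variable {k n}

lemma mem_spSet_iff_isSkewAdjoint {M : Matrix (Fin (2 * n)) (Fin (2 * n)) k} :
    M ∈ spSet k n ↔ (Jmat k n).IsSkewAdjoint M := by
  rw [Matrix.IsSkewAdjoint, IsAdjointPair, mul_neg, ← add_eq_zero_iff_eq_neg]
  rfl

end StandardForm

theorem stmt19_general {k : Type*} [Field k] [NeZero (2 : k)] {N : ℕ} (r : ℕ)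
    {J : Matrix (Fin N) (Fin N) k} (hJ : Jᵀ = -J) (hJ_det : IsUnit J.det) :
    zClosure {M : Matrix (Fin N) (Fin N) k |
        ∃ x : Fin r → Matrix (Fin N) (Fin N) k,
          (∀ i, J.IsSkewAdjoint (x i) ∧ (x i).rank ≤ 1) ∧ M = ∑ i, x i}
      = {M | J.IsSkewAdjoint M ∧ M.rank ≤ r} := by
  simp only [exists_eq_sum_iff_isSkewAdjoint_and_rank_le hJ hJ_det]
  exact (isZClosed_setOf_isSkewAdjoint J).inter (isZClosed_setOf_rank_le k N r)

/-- The affine cone over the `r`-th secant variety of the projectivized minimal nilpotent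
orbit of `sp_{2n}`: the Zariski closure of the set of sums of `r` symplectic matrices of
rank at most `1` is the set of symplectic matrices of rank at most `r`. -/
theorem stmt19 {k : Type*} [Field k] [IsAlgClosed k] [CharZero k]
    (n r : ℕ) (hr : 1 ≤ r) :
    zClosure {M : Matrix (Fin (2 * n)) (Fin (2 * n)) k |
        ∃ x : Fin r → Matrix (Fin (2 * n)) (Fin (2 * n)) k,
          (∀ i, x i ∈ spSet k n ∧ (x i).rank ≤ 1) ∧ M = ∑ i, x i}
      = {M | M ∈ spSet k n ∧ M.rank ≤ r} := by
  simpa only [mem_spSet_iff_isSkewAdjoint] using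
    stmt19_general r (transpose_Jmat k n) (isUnit_det_Jmat k n)
end
end
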